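/- arXiv:2412.04200 — 3 statements merged into one kernel-verified Lean document; each statement's English description precedes it below -/
import Mathlib

section
/- If G is a connected simple graph with maximum degree at most 3 (a subcubic graph) that is not isomorphic to K2 (the complete graph on two vertices), then lir(^2G) ≤ 3. -/
open scoped Classical

/-- The `c`-degree of a vertex `x`: the sum of the multiplicities `w e c`
over all edges `e` of `G` incident with `x`. -/
noncomputable def colorDeg {V : Type*} [Fintype V] [DecidableEq V]
    (G : SimpleGraph V) {k : ℕ} (w : Sym2 V → Fin k → ℕ) (c : Fin k) (x : V) : ℕ :=
  ∑ e ∈ G.edgeFinset.filter (fun e => x ∈ e), w e c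

/-- `w` encodes a locally irregular `k`-edge-coloring of `²G`: each edge of `G`
gets a multiplicity vector summing to `2`, and for every edge `uv` and every
color `c` with `w s(u,v) c ≥ 1`, the `c`-degrees of `u` and `v` differ. -/
def IsLIRk {V : Type*} [Fintype V] [DecidableEq V]
    (G : SimpleGraph V) {k : ℕ} (w : Sym2 V → Fin k → ℕ) : Prop :=
  (∀ e ∈ G.edgeSet, ∑ c, w e c = 2) ∧
  ∀ u v : V, G.Adj u v → ∀ c : Fin k,
    1 ≤ w s(u, v) c → colorDeg G w c u ≠ colorDeg G w c v

/-- `lir(²G) ≤ k`: there is a locally irregular `k`-edge-coloring of `²G`. -/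
def LIRtwoLE {V : Type*} [Fintype V] [DecidableEq V] (G : SimpleGraph V) (k : ℕ) : Prop :=
  ∃ w : Sym2 V → Fin k → ℕ, IsLIRk G w

structure St where
  (a b c d e f : ℕ)

instance : DecidableEq St := fun s t =>
  decidable_of_iff (s.a = t.a ∧ s.b = t.b ∧ s.c = t.c ∧ s.d = t.d ∧ s.e = t.e ∧ s.f = t.f)
    (by cases s; cases t; simp)

def sZ : List St := [⟨0,0,2,0,0,1⟩, ⟨0,0,2,0,0,3⟩, ⟨0,0,2,0,0,4⟩, ⟨0,2,0,0,2,0⟩, ⟨0,2,0,0,4,0⟩, ⟨2,0,0,2,0,0⟩]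

def fm : List (List St) := [
  [⟨0,0,2,0,0,1⟩],
  [⟨0,0,2,0,0,3⟩],
  [⟨0,0,2,0,0,4⟩],
  [⟨0,2,0,0,2,0⟩],
  [⟨0,2,0,0,4,0⟩],
  [⟨2,0,0,2,0,0⟩],
  [⟨0,1,1,0,4,0⟩, ⟨1,1,0,0,4,0⟩],
  [⟨0,0,2,0,0,2⟩, ⟨0,2,0,0,0,0⟩, ⟨1,1,0,2,0,0⟩],
  [⟨0,0,2,0,0,2⟩, ⟨1,1,0,0,2,0⟩, ⟨2,0,0,0,0,0⟩],
  [⟨0,2,0,0,0,0⟩, ⟨1,1,0,0,0,0⟩, ⟨2,0,0,0,0,0⟩],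
  [⟨1,0,1,4,0,0⟩, ⟨1,1,0,4,0,0⟩, ⟨2,0,0,4,0,0⟩],
  [⟨0,0,2,0,0,0⟩, ⟨0,1,1,0,2,0⟩, ⟨1,0,1,2,0,0⟩, ⟨1,1,0,2,2,0⟩],
  [⟨0,0,2,0,0,0⟩, ⟨0,1,1,0,0,0⟩, ⟨0,2,0,0,0,0⟩, ⟨1,0,1,2,0,0⟩, ⟨1,1,0,2,0,0⟩],
  [⟨0,0,2,0,0,0⟩, ⟨0,1,1,0,2,0⟩, ⟨1,0,1,0,0,0⟩, ⟨1,1,0,0,2,0⟩, ⟨2,0,0,0,0,0⟩],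
  [⟨0,1,1,0,1,3⟩, ⟨0,2,0,0,1,0⟩, ⟨1,0,1,0,0,3⟩, ⟨1,0,1,1,0,2⟩, ⟨1,1,0,0,1,0⟩, ⟨1,1,0,1,1,0⟩, ⟨2,0,0,0,0,0⟩, ⟨2,0,0,1,0,0⟩]]

def ot : List (List St) := [
  [⟨1,0,1,1,0,1⟩, ⟨2,0,0,2,0,0⟩],
  [⟨1,1,0,2,0,0⟩, ⟨2,0,0,2,0,0⟩],
  [⟨0,2,0,0,0,0⟩, ⟨1,1,0,0,0,0⟩, ⟨2,0,0,0,0,0⟩],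
  [⟨0,1,1,0,4,0⟩, ⟨1,1,0,0,4,0⟩],
  [⟨0,0,2,0,0,2⟩, ⟨1,1,0,0,2,0⟩, ⟨2,0,0,0,0,0⟩],
  [⟨1,0,1,4,0,0⟩, ⟨1,1,0,4,0,0⟩, ⟨2,0,0,4,0,0⟩],
  [⟨1,1,0,2,2,0⟩, ⟨2,0,0,2,0,0⟩],
  [⟨0,0,2,0,0,1⟩, ⟨1,0,1,0,0,1⟩, ⟨1,0,1,1,0,0⟩],
  [⟨0,0,2,0,0,2⟩, ⟨0,2,0,0,0,0⟩, ⟨1,1,0,2,0,0⟩],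
  [⟨0,0,2,0,0,3⟩, ⟨1,1,0,1,1,0⟩],
  [⟨0,1,1,0,2,2⟩, ⟨0,2,0,0,1,0⟩, ⟨0,2,0,0,2,0⟩],
  [⟨0,0,2,0,0,2⟩, ⟨0,1,1,0,1,1⟩, ⟨0,2,0,0,2,0⟩],
  [⟨0,0,2,0,0,1⟩, ⟨0,1,1,0,2,2⟩, ⟨0,2,0,0,3,0⟩],
  [⟨0,0,2,0,0,0⟩, ⟨0,1,1,0,2,0⟩, ⟨1,0,1,2,0,0⟩, ⟨1,1,0,2,2,0⟩],
  [⟨0,0,2,0,0,0⟩, ⟨0,1,1,0,2,0⟩, ⟨1,0,1,0,0,0⟩, ⟨1,1,0,0,2,0⟩, ⟨2,0,0,0,0,0⟩],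
  [⟨0,2,0,0,0,0⟩, ⟨0,2,0,0,2,0⟩, ⟨1,0,1,2,0,2⟩],
  [⟨0,1,1,0,0,4⟩, ⟨0,2,0,0,1,0⟩, ⟨0,2,0,0,2,0⟩],
  [⟨0,0,2,0,0,1⟩, ⟨0,2,0,0,1,0⟩, ⟨1,0,1,4,0,0⟩],
  [⟨0,0,2,0,0,1⟩, ⟨0,1,1,0,1,1⟩, ⟨1,0,1,2,0,2⟩],
  [⟨0,0,2,0,0,0⟩, ⟨0,0,2,0,0,1⟩, ⟨2,0,0,3,0,0⟩],
  [⟨0,0,2,0,0,0⟩, ⟨0,1,1,0,0,0⟩, ⟨0,2,0,0,0,0⟩, ⟨1,0,1,2,0,0⟩, ⟨1,1,0,2,0,0⟩],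
  [⟨0,1,1,0,1,3⟩, ⟨0,2,0,0,1,0⟩, ⟨1,0,1,0,0,3⟩, ⟨1,0,1,1,0,2⟩, ⟨1,1,0,0,1,0⟩, ⟨1,1,0,1,1,0⟩, ⟨2,0,0,0,0,0⟩, ⟨2,0,0,1,0,0⟩]]

def nl : St := ⟨0,0,0,0,0,0⟩

def nf : List (List St) := [nl] :: fm

/-- vectors as states with zero outside part -/
def ev : List St := [⟨0,2,0,0,0,0⟩, ⟨0,0,2,0,0,0⟩, ⟨0,1,1,0,0,0⟩, ⟨2,0,0,0,0,0⟩, ⟨1,1,0,0,0,0⟩, ⟨1,0,1,0,0,0⟩]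

def St.add (s t : St) : St := ⟨s.a + t.a, s.b + t.b, s.c + t.c, 0, 0, 0⟩

def okB (p t : St) : Bool :=
  (p.a.beq 0 || !(t.a.beq (p.a + p.d))) && (p.b.beq 0 || !(t.b.beq (p.b + p.e))) &&
    (p.c.beq 0 || !(t.c.beq (p.c + p.f)))

def mtB (p t : St) : Bool :=
  (p.a.beq 0 || t.a.beq (p.a + p.d)) && (p.b.beq 0 || t.b.beq (p.b + p.e)) &&
    (p.c.beq 0 || t.c.beq (p.c + p.f))

def neB (x s t : St) : Bool :=
  (x.a.beq 0 || !(s.a.beq t.a)) && (x.b.beq 0 || !(s.b.beq t.b)) &&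
    (x.c.beq 0 || !(s.c.beq t.c))

def xv (s : St) : Fin 3 → ℕ := ![s.a, s.b, s.c]
def ov (s : St) : Fin 3 → ℕ := ![s.d, s.e, s.f]

def Ok (p : St) (T : Fin 3 → ℕ) : Prop := ∀ c, xv p c ≠ 0 → T c ≠ xv p c + ov p c
def Mt (p : St) (T : Fin 3 → ℕ) : Prop := ∀ c, xv p c ≠ 0 → T c = xv p c + ov p c

lemma xv_add (s t : St) : xv (s.add t) = xv s + xv t := by
  ext c; fin_cases c <;> rfl

lemma ok_of (p t : St) (h : okB p t = true) : Ok p (xv t) := by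
  intro c
  simp only [okB, Bool.and_eq_true, Bool.or_eq_true, Nat.beq_eq, Bool.not_eq_true',
    ← Bool.not_eq_true] at h
  obtain ⟨⟨h1, h2⟩, h3⟩ := h
  fin_cases c <;> simp [xv, ov] <;> tauto

lemma mt_of (p t : St) (h : mtB p t = true) : Mt p (xv t) := by
  intro c
  simp only [mtB, Bool.and_eq_true, Bool.or_eq_true, Nat.beq_eq] at h
  obtain ⟨⟨h1, h2⟩, h3⟩ := h
  fin_cases c <;> simp [xv, ov] <;> tauto

lemma ne_of (x s t : St) (h : neB x s t = true) : ∀ c, xv x c ≠ 0 → xv s c ≠ xv t c := by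
  intro c
  simp only [neB, Bool.and_eq_true, Bool.or_eq_true, Nat.beq_eq, Bool.not_eq_true',
    ← Bool.not_eq_true] at h
  obtain ⟨⟨h1, h2⟩, h3⟩ := h
  fin_cases c <;> simp [xv] <;> tauto

lemma nl_add : xv nl = 0 := by ext c; fin_cases c <;> rfl

def k21 : Bool := nf.all fun P => nf.all fun Q => ot.any fun R => R.all fun r =>
  P.any fun p => Q.any fun q =>
    okB p ((p.add q).add r) && okB q ((p.add q).add r) && mtB r ((p.add q).add r)

def k12 : Bool := nf.all fun P => P.any fun p => sZ.any fun r => sZ.any fun s =>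
    okB p ((p.add r).add s) && mtB r ((p.add r).add s) && mtB s ((p.add r).add s)

def k03 : Bool := sZ.any fun p => sZ.any fun r => sZ.any fun s =>
    mtB p ((p.add r).add s) && mtB r ((p.add r).add s) && mtB s ((p.add r).add s)

def kfin : Bool := ot.all fun P => ot.all fun Q => ([nl] :: ot).all fun R =>
  P.any fun p => Q.any fun q => R.any fun r =>
    okB p ((p.add q).add r) && okB q ((p.add q).add r) && okB r ((p.add q).add r)

def ktri : Bool := nf.all fun P => nf.all fun Q => nf.all fun R =>
  ev.any fun x => ev.any fun z => P.any fun p => okB p ((p.add x).add z) &&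
    ev.any fun y => Q.any fun q => okB q ((q.add x).add y) &&
      neB x ((p.add x).add z) ((q.add x).add y) &&
      R.any fun r => okB r ((r.add y).add z) &&
        neB y ((q.add x).add y) ((r.add y).add z) && neB z ((p.add x).add z) ((r.add y).add z)

lemma k21_t : k21 = true := by decide +kernel
lemma k12_t : k12 = true := by decide +kernel
lemma k03_t : k03 = true := by decide +kernel
lemma kfin_t : kfin = true := by decide +kernel
lemma ktri_t : ktri = true := by decide +kernel

lemma ot_fm : ∀ R ∈ ot, ∃ F ∈ fm, ∀ s ∈ F, s ∈ R := by decide +kernel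
lemma sZ_fm : ∀ r ∈ sZ, [r] ∈ fm := by decide +kernel
lemma sZ_two : ∀ r ∈ sZ, r.a + r.b + r.c = 2 := by decide +kernel
lemma ot_two : ∀ R ∈ ot, ∀ r ∈ R, r.a + r.b + r.c = 2 := by decide +kernel
lemma ev_two : ∀ r ∈ ev, r.a + r.b + r.c = 2 := by decide +kernel

lemma l21 (P : List St) (hP : P ∈ nf) (Q : List St) (hQ : Q ∈ nf) : ∃ R ∈ ot, ∀ r ∈ R,
    ∃ p ∈ P, ∃ q ∈ Q, Ok p (xv p + xv q + xv r) ∧ Ok q (xv p + xv q + xv r) ∧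
      Mt r (xv p + xv q + xv r) := by
  have h := k21_t
  simp only [k21, List.all_eq_true, List.any_eq_true, Bool.and_eq_true] at h
  obtain ⟨R, hR, h⟩ := h P hP Q hQ
  refine ⟨R, hR, fun r hr => ?_⟩
  obtain ⟨p, hp, q, hq, ⟨h1, h2⟩, h3⟩ := h r hr
  refine ⟨p, hp, q, hq, ?_⟩
  simp only [← xv_add]
  exact ⟨ok_of _ _ h1, ok_of _ _ h2, mt_of _ _ h3⟩

lemma l12 (P : List St) (hP : P ∈ nf) : ∃ p ∈ P, ∃ r ∈ sZ, ∃ s ∈ sZ,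
    Ok p (xv p + xv r + xv s) ∧ Mt r (xv p + xv r + xv s) ∧
      Mt s (xv p + xv r + xv s) := by
  have h := k12_t
  simp only [k12, List.all_eq_true, List.any_eq_true, Bool.and_eq_true] at h
  obtain ⟨p, hp, r, hr, s, hs, ⟨h1, h2⟩, h3⟩ := h P hP
  refine ⟨p, hp, r, hr, s, hs, ?_⟩
  simp only [← xv_add]
  exact ⟨ok_of _ _ h1, mt_of _ _ h2, mt_of _ _ h3⟩

lemma l03 : ∃ p ∈ sZ, ∃ r ∈ sZ, ∃ s ∈ sZ,
    Mt p (xv p + xv r + xv s) ∧ Mt r (xv p + xv r + xv s) ∧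
      Mt s (xv p + xv r + xv s) := by
  have h := k03_t
  simp only [k03, List.any_eq_true, Bool.and_eq_true] at h
  obtain ⟨p, hp, r, hr, s, hs, ⟨h1, h2⟩, h3⟩ := h
  refine ⟨p, hp, r, hr, s, hs, ?_⟩
  simp only [← xv_add]
  exact ⟨mt_of _ _ h1, mt_of _ _ h2, mt_of _ _ h3⟩

lemma lfin (P : List St) (hP : P ∈ ot) (Q : List St) (hQ : Q ∈ ot)
    (R : List St) (hR : R ∈ [nl] :: ot) :
    ∃ p ∈ P, ∃ q ∈ Q, ∃ r ∈ R, Ok p (xv p + xv q + xv r) ∧ Ok q (xv p + xv q + xv r) ∧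
      Ok r (xv p + xv q + xv r) := by
  have h := kfin_t
  simp only [kfin, List.all_eq_true, List.any_eq_true, Bool.and_eq_true] at h
  obtain ⟨p, hp, q, hq, r, hr, ⟨h1, h2⟩, h3⟩ := h P hP Q hQ R hR
  refine ⟨p, hp, q, hq, r, hr, ?_⟩
  simp only [← xv_add]
  exact ⟨ok_of _ _ h1, ok_of _ _ h2, ok_of _ _ h3⟩

lemma ltri (P : List St) (hP : P ∈ nf) (Q : List St) (hQ : Q ∈ nf)
    (R : List St) (hR : R ∈ nf) :
    ∃ p ∈ P, ∃ q ∈ Q, ∃ r ∈ R, ∃ x ∈ ev, ∃ y ∈ ev, ∃ z ∈ ev,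
      Ok p (xv p + xv x + xv z) ∧ Ok q (xv q + xv x + xv y) ∧ Ok r (xv r + xv y + xv z) ∧
      (∀ c, xv x c ≠ 0 → (xv p + xv x + xv z) c ≠ (xv q + xv x + xv y) c) ∧
      (∀ c, xv y c ≠ 0 → (xv q + xv x + xv y) c ≠ (xv r + xv y + xv z) c) ∧
      (∀ c, xv z c ≠ 0 → (xv p + xv x + xv z) c ≠ (xv r + xv y + xv z) c) := by
  have h := ktri_t
  simp only [ktri, List.all_eq_true, List.any_eq_true, Bool.and_eq_true] at h
  obtain ⟨x, hx, z, hz, p, hp, h1, y, hy, q, hq, ⟨h2, h3⟩, r, hr, ⟨h4, h5⟩, h6⟩ :=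
    h P hP Q hQ R hR
  refine ⟨p, hp, q, hq, r, hr, x, hx, y, hy, z, hz, ?_⟩
  simp only [← xv_add]
  exact ⟨ok_of _ _ h1, ok_of _ _ h2, ok_of _ _ h4, ne_of _ _ _ h3, ne_of _ _ _ h5, ne_of _ _ _ h6⟩

def FmSub (O : List St) : Prop := ∃ F ∈ fm, ∀ s ∈ F, s ∈ O

lemma fmSub_of_ot {O : List St} (h : O ∈ ot) : FmSub O := ot_fm O h

lemma fmSub_single {r : St} (h : r ∈ sZ) : FmSub [r] := ⟨[r], sZ_fm r h, fun _ hs => hs⟩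

lemma sum_xv (r : St) : ∑ c, xv r c = r.a + r.b + r.c := by
  simp [Fin.sum_univ_three, xv]

lemma fm_nf {F : List St} (h : F ∈ fm) : F ∈ nf := List.mem_cons_of_mem _ h
lemma nl_nf : [nl] ∈ nf := List.mem_cons_self

lemma l21' {V' : Type*} (B : Finset V') (hB : B.card ≤ 2) (P : V' → List St)
    (hP : ∀ u ∈ B, FmSub (P u)) : ∃ R ∈ ot, ∀ r ∈ R, ∃ p : V' → St, (∀ u ∈ B, p u ∈ P u) ∧
      (∀ u ∈ B, Ok (p u) (∑ u ∈ B, xv (p u) + xv r)) ∧ Mt r (∑ u ∈ B, xv (p u) + xv r) := by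
  interval_cases h : B.card
  · rw [Finset.card_eq_zero] at h
    subst h
    obtain ⟨R, hR, h⟩ := l21 _ nl_nf _ nl_nf
    refine ⟨R, hR, fun r hr => ⟨fun _ => nl, by simp, by simp, ?_⟩⟩
    obtain ⟨p, hp, q, hq, h1, h2, h3⟩ := h r hr
    simp only [List.mem_singleton] at hp hq
    subst hp hq
    simpa [nl_add] using h3
  · obtain ⟨u, rfl⟩ := Finset.card_eq_one.1 h
    obtain ⟨F, hF, hFP⟩ := hP u (by simp)
    obtain ⟨R, hR, h⟩ := l21 F (fm_nf hF) _ nl_nf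
    refine ⟨R, hR, fun r hr => ?_⟩
    obtain ⟨p, hp, q, hq, h1, h2, h3⟩ := h r hr
    simp only [List.mem_singleton] at hq
    subst hq
    refine ⟨fun _ => p, ?_, ?_, ?_⟩
    · simpa using hFP p hp
    · simpa [nl_add] using h1
    · simpa [nl_add] using h3
  · obtain ⟨u, v, huv, rfl⟩ := Finset.card_eq_two.1 h
    obtain ⟨F, hF, hFP⟩ := hP u (by simp)
    obtain ⟨F', hF', hFP'⟩ := hP v (by simp)
    obtain ⟨R, hR, h⟩ := l21 F (fm_nf hF) F' (fm_nf hF')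
    refine ⟨R, hR, fun r hr => ?_⟩
    obtain ⟨p, hp, q, hq, h1, h2, h3⟩ := h r hr
    refine ⟨fun t => if t = u then p else q, ?_, ?_, ?_⟩
    · simpa [huv.symm] using ⟨hFP p hp, hFP' q hq⟩
    · simpa [huv.symm, Finset.sum_pair huv] using ⟨h1, h2⟩
    · simpa [huv.symm, Finset.sum_pair huv] using h3

lemma l12' {V' : Type*} (B : Finset V') (hB : B.card ≤ 1) (P : V' → List St)
    (hP : ∀ u ∈ B, FmSub (P u)) : ∃ r ∈ sZ, ∃ s ∈ sZ, ∃ p : V' → St, (∀ u ∈ B, p u ∈ P u) ∧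
      (∀ u ∈ B, Ok (p u) (∑ u ∈ B, xv (p u) + (xv r + xv s))) ∧
      Mt r (∑ u ∈ B, xv (p u) + (xv r + xv s)) ∧ Mt s (∑ u ∈ B, xv (p u) + (xv r + xv s)) := by
  interval_cases h : B.card
  · rw [Finset.card_eq_zero] at h
    subst h
    obtain ⟨p, hp, r, hr, s, hs, h1, h2, h3⟩ := l12 _ nl_nf
    simp only [List.mem_singleton] at hp
    subst hp
    refine ⟨r, hr, s, hs, fun _ => nl, by simp, by simp, ?_, ?_⟩
    · simpa [nl_add] using h2
    · simpa [nl_add] using h3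
  · obtain ⟨u, rfl⟩ := Finset.card_eq_one.1 h
    obtain ⟨F, hF, hFP⟩ := hP u (by simp)
    obtain ⟨p, hp, r, hr, s, hs, h1, h2, h3⟩ := l12 _ (fm_nf hF)
    refine ⟨r, hr, s, hs, fun _ => p, by simpa using hFP p hp, ?_, ?_, ?_⟩
    · simpa [add_assoc] using h1
    · simpa [add_assoc] using h2
    · simpa [add_assoc] using h3

lemma local_step {V' : Type*} (B F : Finset V') (hF : F.Nonempty) (hc : B.card + F.card ≤ 3)
    (P : V' → List St) (hP : ∀ u ∈ B, FmSub (P u)) :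
    ∃ Q : V' → List St, (∀ y ∈ F, FmSub (Q y)) ∧ (F.card = 1 → ∀ y ∈ F, Q y ∈ ot) ∧
      ∀ q : V' → St, (∀ y ∈ F, q y ∈ Q y) → (∀ y ∈ F, ∑ c, xv (q y) c = 2) ∧
        ∃ p : V' → St, (∀ u ∈ B, p u ∈ P u) ∧
          (∀ u ∈ B, Ok (p u) (∑ u ∈ B, xv (p u) + ∑ y ∈ F, xv (q y))) ∧
          (∀ y ∈ F, Mt (q y) (∑ u ∈ B, xv (p u) + ∑ y ∈ F, xv (q y))) := by
  have h0 : 0 < F.card := hF.card_pos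
  have h3 : F.card ≤ 3 := by omega
  interval_cases h : F.card
  · obtain ⟨y, rfl⟩ := Finset.card_eq_one.1 h
    obtain ⟨R, hR, hh⟩ := l21' B (by omega) P hP
    refine ⟨fun _ => R, fun _ _ => fmSub_of_ot hR, fun _ _ _ => hR, fun q hq => ⟨?_, ?_⟩⟩
    · simp only [Finset.mem_singleton, forall_eq] at hq ⊢
      rw [sum_xv]
      exact ot_two R hR _ hq
    · obtain ⟨p, h1, h2, h3⟩ := hh (q y) (hq y (by simp))
      exact ⟨p, h1, by simpa using h2, by simpa using h3⟩
  · obtain ⟨y, z, hyz, rfl⟩ := Finset.card_eq_two.1 h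
    obtain ⟨r, hr, s, hs, p, h1, h2, h3, h4⟩ := l12' B (by omega) P hP
    refine ⟨fun t => if t = y then [r] else [s], ?_, by simp, fun q hq => ?_⟩
    · simpa [hyz.symm] using ⟨fmSub_single hr, fmSub_single hs⟩
    · obtain ⟨h5, h6⟩ : q y = r ∧ q z = s := by simpa [hyz.symm] using hq
      subst h5 h6
      refine ⟨?_, p, h1, ?_, ?_⟩
      · simp only [sum_xv]
        simpa using ⟨sZ_two _ hr, sZ_two _ hs⟩
      · simpa [Finset.sum_pair hyz] using h2
      · simpa [Finset.sum_pair hyz] using ⟨h3, h4⟩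
  · have hB : B = ∅ := by rw [← Finset.card_eq_zero]; omega
    subst hB
    obtain ⟨x, y, z, hxy, hxz, hyz, rfl⟩ := Finset.card_eq_three.1 h
    obtain ⟨p, hp, r, hr, s, hs, h1, h2, h3⟩ := l03
    refine ⟨fun t => if t = x then [p] else if t = y then [r] else [s], ?_, by simp,
      fun q hq => ?_⟩
    · simpa [hyz.symm, hxy.symm, hxz.symm] using
        ⟨fmSub_single hp, fmSub_single hr, fmSub_single hs⟩
    · obtain ⟨h4, h5, h6⟩ : q x = p ∧ q y = r ∧ q z = s := by
        simpa [hyz.symm, hxy.symm, hxz.symm] using hq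
      subst h4 h5 h6
      have e : ∑ t ∈ {x, y, z}, xv (q t) = xv (q x) + xv (q y) + xv (q z) := by
        rw [Finset.sum_insert (by simp [hxy, hxz]), Finset.sum_pair hyz, add_assoc]
      refine ⟨?_, fun _ => nl, by simp, by simp, ?_⟩
      · simp only [sum_xv]
        simpa using ⟨sZ_two _ hp, sZ_two _ hr, sZ_two _ hs⟩
      · rw [e]
        simpa using ⟨h1, h2, h3⟩

section
variable {V : Type*} [Fintype V] [DecidableEq V] (G : SimpleGraph V)

def Gd (U : Finset V) (σ : V → V → St) (w : Sym2 V → Fin 3 → ℕ) : Prop :=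
  (∀ u v, G.Adj u v → u ∈ U → ∑ c, w s(u, v) c = 2) ∧
  (∀ u v, G.Adj u v → u ∈ U → v ∈ U → ∀ c, w s(u, v) c ≠ 0 →
    colorDeg G w c u ≠ colorDeg G w c v) ∧
  (∀ u v, G.Adj u v → u ∈ U → v ∉ U → w s(u, v) = xv (σ u v) ∧
    Mt (σ u v) (fun c => colorDeg G w c u))

def LInv (Z : V → Prop) (U : Finset V) : Prop :=
  ∃ O : V → V → List St,
    (∀ u v, G.Adj u v → u ∈ U → v ∉ U → FmSub (O u v) ∧ (Z u → O u v ∈ ot)) ∧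
    ∀ σ : V → V → St, (∀ u v, G.Adj u v → u ∈ U → v ∉ U → σ u v ∈ O u v) →
      ∃ w, Gd G U σ w

lemma colorDeg_eq {k : ℕ} (w : Sym2 V → Fin k → ℕ) (c : Fin k) (x : V) :
    colorDeg G w c x = ∑ y ∈ Finset.univ.filter (fun y => G.Adj x y), w s(x, y) c := by
  unfold colorDeg
  symm
  refine Finset.sum_bij (fun y _ => s(x, y)) ?_ ?_ ?_ ?_
  · intro y hy
    simpa using hy
  · intro y _ z _ h
    exact Sym2.congr_right.1 h
  · intro e he
    simp only [Finset.mem_filter, SimpleGraph.mem_edgeFinset] at he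
    obtain ⟨he, y, rfl⟩ := he
    exact ⟨y, by simpa using he, rfl⟩
  · intros; rfl

lemma colorDeg_congr {k : ℕ} (w w' : Sym2 V → Fin k → ℕ) (c : Fin k) (x : V)
    (h : ∀ y, G.Adj x y → w s(x, y) = w' s(x, y)) : colorDeg G w c x = colorDeg G w' c x := by
  rw [colorDeg_eq, colorDeg_eq]
  refine Finset.sum_congr rfl fun y hy => ?_
  rw [h y (by simpa using hy)]

lemma card_nb (hsub : ∀ v : V, G.degree v ≤ 3) (v : V) :
    (Finset.univ.filter (fun y => G.Adj v y)).card ≤ 3 := by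
  have := hsub v
  rw [← SimpleGraph.card_neighborFinset_eq_degree] at this
  convert this using 2
  ext y; simp

lemma inv_step (hsub : ∀ v : V, G.degree v ≤ 3) (Z : V → Prop) (U : Finset V) (v : V)
    (hv : v ∉ U) (hf : ∃ y, G.Adj v y ∧ y ∉ U)
    (hZ : Z v → ∀ y y', G.Adj v y → G.Adj v y' → y ∉ U → y' ∉ U → y = y')
    (h : LInv G Z U) : LInv G Z (insert v U) := by
  obtain ⟨O, hO, hw⟩ := h
  set N := Finset.univ.filter (fun y => G.Adj v y) with hN
  set B := N.filter (fun y => y ∈ U) with hB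
  set F := N.filter (fun y => y ∉ U) with hF
  have mB : ∀ y, y ∈ B ↔ G.Adj v y ∧ y ∈ U := by simp [hB, hN]
  have mF : ∀ y, y ∈ F ↔ G.Adj v y ∧ y ∉ U := by simp [hF, hN]
  have hFn : F.Nonempty := by
    obtain ⟨y, hy⟩ := hf
    exact ⟨y, (mF y).2 hy⟩
  have hc : B.card + F.card ≤ 3 := by
    rw [hB, hF, Finset.card_filter_add_card_filter_not]
    exact card_nb G hsub v
  obtain ⟨Q, hQ1, hQ2, hQ3⟩ := local_step B F hFn hc (fun u => O u v)
    (fun u hu => (hO u v ((mB u).1 hu).1.symm ((mB u).1 hu).2 hv).1)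
  refine ⟨fun u y => if u = v then Q y else O u y, ?_, ?_⟩
  · intro u y huy hu hy
    simp only [Finset.mem_insert, not_or] at hu hy
    by_cases huv : u = v
    · subst huv
      have hyF : y ∈ F := (mF y).2 ⟨huy, hy.2⟩
      simp only [if_true]
      refine ⟨hQ1 y hyF, fun hz => hQ2 ?_ y hyF⟩
      rw [Finset.card_eq_one]
      refine ⟨y, Finset.eq_singleton_iff_unique_mem.2 ⟨hyF, fun y' hy' => ?_⟩⟩
      exact hZ hz _ _ ((mF _).1 hy').1 huy ((mF _).1 hy').2 hy.2
    · simp only [huv, if_false]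
      exact hO u y huy (hu.resolve_left huv) hy.2
  · intro σ hσ
    obtain ⟨hq2, p, hp1, hp2, hp3⟩ := hQ3 (fun y => σ v y) (fun y hy => by
      have := hσ v y ((mF y).1 hy).1 (by simp) (by
        simp only [Finset.mem_insert, not_or]
        exact ⟨((mF y).1 hy).1.ne', ((mF y).1 hy).2⟩)
      simpa using this)
    obtain ⟨w, hw1, hw2, hw3⟩ := hw (fun u y => if y = v then p u else σ u y) (by
      intro u y huy hu hy
      by_cases hyv : y = v
      · subst hyv
        simpa using hp1 u ((mB u).2 ⟨huy.symm, hu⟩)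
      · have huv : u ≠ v := fun h => hv (h ▸ hu)
        have := hσ u y huy (by simp [hu]) (by simp [hyv, hy])
        simpa [huv, hyv] using this)
    set w' : Sym2 V → Fin 3 → ℕ := fun e =>
      if h : ∃ y ∈ F, e = s(v, y) then xv (σ v h.choose) else w e with hw'
    have wF : ∀ y ∈ F, w' s(v, y) = xv (σ v y) := by
      intro y hy
      have h : ∃ y' ∈ F, s(v, y) = s(v, y') := ⟨y, hy, rfl⟩
      have h2 : y = h.choose := by
        have := h.choose_spec.2
        exact Sym2.congr_right.1 this
      simp only [hw', dif_pos h]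
      rw [← h2]
    have wU : ∀ u y, u ∈ U → w' s(u, y) = w s(u, y) := by
      intro u y hu
      have h : ¬ ∃ y' ∈ F, s(u, y) = s(v, y') := by
        rintro ⟨y', hy', h⟩
        rw [Sym2.eq_iff] at h
        rcases h with ⟨h, _⟩ | ⟨h, _⟩
        · exact hv (h ▸ hu)
        · exact ((mF y').1 hy').2 (h ▸ hu)
      simp only [hw', dif_neg h]
    have dU : ∀ u ∈ U, ∀ c, colorDeg G w' c u = colorDeg G w c u := fun u hu c =>
      colorDeg_congr G _ _ c u fun y _ => wU u y hu
    have dv : ∀ c, colorDeg G w' c v = (∑ u ∈ B, xv (p u) + ∑ y ∈ F, xv (σ v y)) c := by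
      intro c
      rw [colorDeg_eq, ← hN, ← Finset.sum_filter_add_sum_filter_not N (fun y => y ∈ U), ← hB, ← hF]
      simp only [Pi.add_apply, Finset.sum_apply]
      congr 1
      · refine Finset.sum_congr rfl fun u hu => ?_
        obtain ⟨h1, h2⟩ := (mB u).1 hu
        rw [Sym2.eq_swap, wU u v h2, (hw3 u v h1.symm h2 hv).1]
        simp
      · exact Finset.sum_congr rfl fun y hy => by rw [wF y hy]
    have key : ∀ u, G.Adj v u → u ∈ U → ∀ c, w' s(u, v) c ≠ 0 →
        colorDeg G w' c u ≠ colorDeg G w' c v := by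
      intro u hvu hu c hc
      obtain ⟨h1, h2⟩ := hw3 u v hvu.symm hu hv
      simp only [if_true] at h1 h2
      rw [wU u v hu, h1] at hc
      rw [dU u hu, dv]
      have h3 := h2 c hc
      have h4 := hp2 u ((mB u).2 ⟨hvu, hu⟩) c hc
      simp only at h3
      rw [h3]
      exact h4.symm
    refine ⟨w', ?_, ?_, ?_⟩
    · intro u y huy hu
      rw [Finset.mem_insert] at hu
      rcases hu with rfl | hu
      · by_cases hy : y ∈ U
        · rw [Sym2.eq_swap, wU y u hy]
          exact hw1 y u huy.symm hy
        · have := (mF y).2 ⟨huy, hy⟩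
          rw [wF y this]
          exact hq2 y this
      · rw [wU u y hu]
        exact hw1 u y huy hu
    · intro u y huy hu hy c hc
      rw [Finset.mem_insert] at hu hy
      rcases hu with rfl | hu
      · rcases hy with rfl | hy
        · exact absurd huy (G.irrefl)
        · rw [Sym2.eq_swap] at hc
          exact (key y huy hy c hc).symm
      · rcases hy with rfl | hy
        · exact key u huy.symm hu c hc
        · rw [dU u hu, dU y hy]
          rw [wU u y hu] at hc
          exact hw2 u y huy hu hy c hc
    · intro u y huy hu hy
      simp only [Finset.mem_insert, not_or] at hu hy
      rcases hu with rfl | hu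
      · have hyF := (mF y).2 ⟨huy, hy.2⟩
        refine ⟨wF y hyF, ?_⟩
        intro c hc
        simp only [dv]
        exact hp3 y hyF c hc
      · obtain ⟨h1, h2⟩ := hw3 u y huy hu hy.2
        simp only [hy.1, if_false] at h1 h2
        refine ⟨by rw [wU u y hu, h1], ?_⟩
        intro c hc
        simp only [dU u hu]
        exact h2 c hc

lemma inv_empty (Z : V → Prop) : LInv G Z ∅ :=
  ⟨fun _ _ => [], by simp, fun _ _ => ⟨fun _ _ => 0, by simp [Gd]⟩⟩

lemma inv_core (hsub : ∀ v : V, G.degree v ≤ 3) (Z : V → Prop) (K : Finset V) (d : V → ℕ)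
    (hd : ∀ v ∉ K, ∃ y, G.Adj v y ∧ d y < d v)
    (hZ : ∀ v ∉ K, Z v → ∀ y y', G.Adj v y → G.Adj v y' → (y ∈ K ∨ d y ≤ d v) →
      (y' ∈ K ∨ d y' ≤ d v) → y = y') : LInv G Z Kᶜ := by
  have main : ∀ n, ∃ U : Finset V, Disjoint U K ∧ LInv G Z U ∧
      (∀ v ∉ U, v ∉ K → ∀ u ∈ U, d v ≤ d u) ∧ (n ≤ U.card ∨ U = Kᶜ) := by
    intro n
    induction n with
    | zero => exact ⟨∅, by simp, inv_empty G Z, by simp, by simp⟩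
    | succ n ih =>
      obtain ⟨U, h1, h2, h3, h4⟩ := ih
      by_cases hU : U = Kᶜ
      · exact ⟨U, h1, h2, h3, Or.inr hU⟩
      have hn := h4.resolve_right hU
      have hsubs : U ⊆ Kᶜ := by
        intro x hx
        rw [Finset.mem_compl]
        exact Finset.disjoint_left.1 h1 hx
      have hne : (Kᶜ \ U).Nonempty := by
        rw [Finset.nonempty_iff_ne_empty]
        intro h
        rw [Finset.sdiff_eq_empty_iff_subset] at h
        exact hU (hsubs.antisymm h)
      obtain ⟨v, hv, hmax⟩ := Finset.exists_max_image _ d hne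
      simp only [Finset.mem_sdiff, Finset.mem_compl] at hv hmax
      refine ⟨insert v U, ?_, ?_, ?_, Or.inl ?_⟩
      · rw [Finset.disjoint_insert_left]
        exact ⟨hv.1, h1⟩
      · refine inv_step G hsub Z U v hv.2 ?_ ?_ h2
        · obtain ⟨y, hy, hy'⟩ := hd v hv.1
          refine ⟨y, hy, fun hyU => ?_⟩
          have := h3 v hv.2 hv.1 y hyU
          omega
        · intro hz y y' hy hy' hyU hyU'
          refine hZ v hv.1 hz y y' hy hy' ?_ ?_
          · by_cases hk : y ∈ K
            · exact Or.inl hk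
            · exact Or.inr (hmax y ⟨hk, hyU⟩)
          · by_cases hk : y' ∈ K
            · exact Or.inl hk
            · exact Or.inr (hmax y' ⟨hk, hyU'⟩)
      · intro x hx hxK u hu
        simp only [Finset.mem_insert, not_or] at hx hu
        rcases hu with rfl | hu
        · exact hmax x ⟨hxK, hx.2⟩
        · exact h3 x hx.2 hxK u hu
      · rw [Finset.card_insert_of_notMem hv.2]
        omega
  obtain ⟨U, h1, h2, h3, h4⟩ := main (Fintype.card V + 1)
  have : U.card ≤ Fintype.card V := Finset.card_le_univ U
  have := h4.resolve_left (by omega)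
  exact this ▸ h2

end

section
variable {V : Type*} [Fintype V] [DecidableEq V] (G : SimpleGraph V)

lemma fin_single (ρ : V) (h2 : 2 ≤ (Finset.univ.filter (fun y => G.Adj ρ y)).card)
    (h3 : (Finset.univ.filter (fun y => G.Adj ρ y)).card ≤ 3)
    (h : LInv G (fun v => G.Adj v ρ) {ρ}ᶜ) : LIRtwoLE G 3 := by
  obtain ⟨O, hO, hw⟩ := h
  set N := Finset.univ.filter (fun y => G.Adj ρ y) with hN
  have mN : ∀ y, y ∈ N ↔ G.Adj ρ y := by simp [hN]
  have hOt : ∀ u ∈ N, O u ρ ∈ ot := fun u hu =>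
    (hO u ρ ((mN u).1 hu).symm (by simpa using ((mN u).1 hu).ne') (by simp)).2 ((mN u).1 hu).symm
  have loc : ∃ p : V → St, (∀ u ∈ N, p u ∈ O u ρ) ∧ ∀ u ∈ N, Ok (p u) (∑ u ∈ N, xv (p u)) := by
    clear_value N
    interval_cases hc : N.card
    · obtain ⟨x, y, hxy, rfl⟩ := Finset.card_eq_two.1 hc
      obtain ⟨p, hp, q, hq, r, hr, h4, h5, h6⟩ := lfin (O x ρ) (hOt x (by simp)) (O y ρ)
        (hOt y (by simp)) [nl] (by simp)
      simp only [List.mem_singleton] at hr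
      subst hr
      refine ⟨fun t => if t = x then p else q, ?_, ?_⟩
      · simpa [hxy.symm] using ⟨hp, hq⟩
      · simpa [hxy.symm, Finset.sum_pair hxy, nl_add] using And.intro h4 h5
    · obtain ⟨x, y, z, hxy, hxz, hyz, rfl⟩ := Finset.card_eq_three.1 hc
      obtain ⟨p, hp, q, hq, r, hr, h4, h5, h6⟩ := lfin (O x ρ) (hOt x (by simp)) (O y ρ)
        (hOt y (by simp)) (O z ρ) (List.mem_cons_of_mem _ (hOt z (by simp)))
      refine ⟨fun t => if t = x then p else if t = y then q else r, ?_, ?_⟩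
      · simpa [hyz.symm, hxy.symm, hxz.symm] using ⟨hp, hq, hr⟩
      · rw [Finset.sum_insert (by simp [hxy, hxz]), Finset.sum_pair hyz, ← add_assoc]
        simpa [hyz.symm, hxy.symm, hxz.symm] using And.intro h4 ⟨h5, h6⟩
  obtain ⟨p, hp1, hp2⟩ := loc
  obtain ⟨w, hw1, hw2, hw3⟩ := hw (fun u _ => p u) (by
    intro u y huy hu hy
    have : y = ρ := by simpa using hy
    subst this
    exact hp1 u ((mN u).2 huy.symm))
  have mem : ∀ u, u ≠ ρ → u ∈ ({ρ}ᶜ : Finset V) := fun u hu => by simpa using hu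
  have dρ : ∀ c, colorDeg G w c ρ = (∑ u ∈ N, xv (p u)) c := by
    intro c
    rw [colorDeg_eq, ← hN, Finset.sum_apply]
    refine Finset.sum_congr rfl fun u hu => ?_
    have ha := (mN u).1 hu
    rw [Sym2.eq_swap, (hw3 u ρ ha.symm (mem u ha.ne') (by simp)).1]
  have key : ∀ u, G.Adj u ρ → ∀ c, w s(u, ρ) c ≠ 0 → colorDeg G w c u ≠ colorDeg G w c ρ := by
    intro u hu c hc
    obtain ⟨h1, h2⟩ := hw3 u ρ hu (mem u hu.ne) (by simp)
    rw [h1] at hc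
    have h4 := h2 c hc
    simp only at h4
    rw [h4, dρ]
    exact (hp2 u ((mN u).2 hu.symm) c hc).symm
  refine ⟨w, ?_, ?_⟩
  · intro e he
    induction e with | _ u v =>
    rw [SimpleGraph.mem_edgeSet] at he
    by_cases hu : u = ρ
    · rw [Sym2.eq_swap]
      exact hw1 v u he.symm (mem v (hu ▸ he.ne'))
    · exact hw1 u v he (mem u hu)
  · intro u v huv c hc
    have hc : w s(u, v) c ≠ 0 := by omega
    by_cases hu : u = ρ
    · subst hu
      rw [Sym2.eq_swap] at hc
      exact (key v huv.symm c hc).symm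
    · by_cases hv : v = ρ
      · subst hv
        exact key u huv c hc
      · exact hw2 u v huv (mem u hu) (mem v hv) c hc

/-- one vertex of the triangle: choose an offer representing the at most one outside edge -/
lemma tri_vertex (K : Finset V) (O : V → V → List St)
    (hO : ∀ u v, G.Adj u v → u ∈ Kᶜ → v ∉ Kᶜ → FmSub (O u v)) (a b c : V)
    (hK : K = {a, b, c}) (hab : G.Adj a b) (hac : G.Adj a c) (hbc : b ≠ c)
    (h3 : (Finset.univ.filter (fun y => G.Adj a y)).card ≤ 3) :
    ∃ P ∈ nf, ∀ p ∈ P, (∀ u, G.Adj u a → u ∉ K → p ∈ O u a) ∧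
      ∀ w : Sym2 V → Fin 3 → ℕ, (∀ u, G.Adj u a → u ∉ K → w s(u, a) = xv p) →
        ∀ i, colorDeg G w i a = (xv p + w s(a, b) + w s(a, c)) i := by
  set N := Finset.univ.filter (fun y => G.Adj a y) with hN
  have mN : ∀ y, y ∈ N ↔ G.Adj a y := by simp [hN]
  have hs : ({b, c} : Finset V) ⊆ N := by
    intro x hx
    simp only [Finset.mem_insert, Finset.mem_singleton] at hx
    rw [mN]
    rcases hx with rfl | rfl <;> assumption
  have hcard := Finset.card_sdiff_add_card_eq_card hs
  rw [Finset.card_pair hbc] at hcard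
  have mB : ∀ u, u ∈ N \ {b, c} ↔ G.Adj u a ∧ u ∉ K := by
    intro u
    rw [Finset.mem_sdiff, mN, hK, G.adj_comm]
    simp only [Finset.mem_insert, Finset.mem_singleton]
    constructor
    · rintro ⟨h1, h2⟩
      exact ⟨h1, fun h => h.elim (fun h => h1.ne h) h2⟩
    · rintro ⟨h1, h2⟩
      exact ⟨h1, fun h => h2 (Or.inr h)⟩
  have hdeg : ∀ (w : Sym2 V → Fin 3 → ℕ) i, colorDeg G w i a =
      ∑ y ∈ N \ {b, c}, w s(a, y) i + (w s(a, b) i + w s(a, c) i) := by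
    intro w i
    rw [colorDeg_eq, ← hN, ← Finset.sum_sdiff hs, Finset.sum_pair hbc]
  have h1 : (N \ {b, c}).card ≤ 1 := by omega
  interval_cases h : (N \ {b, c}).card
  · rw [Finset.card_eq_zero] at h
    refine ⟨[nl], nl_nf, fun p hp => ⟨?_, ?_⟩⟩
    · intro u hu huK
      have := (mB u).2 ⟨hu, huK⟩
      simp [h] at this
    · intro w _ i
      rw [hdeg, h]
      simp only [List.mem_singleton] at hp
      subst hp
      simp [nl_add]
  · obtain ⟨u, hu⟩ := Finset.card_eq_one.1 h
    have hu' := (mB u).1 (by simp [hu])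
    obtain ⟨F, hF, hFO⟩ := hO u a hu'.1 (by simpa using hu'.2) (by simp [hK])
    refine ⟨F, fm_nf hF, fun p hp => ⟨?_, ?_⟩⟩
    · intro u' hu1 hu2
      have := (mB u').2 ⟨hu1, hu2⟩
      rw [hu, Finset.mem_singleton] at this
      subst this
      exact hFO p hp
    · intro w hw i
      rw [hdeg, hu, Finset.sum_singleton, Sym2.eq_swap, hw u hu'.1 hu'.2]
      simp [add_assoc]

lemma fin_tri (hsub : ∀ v : V, G.degree v ≤ 3) (Z : V → Prop) (a b c : V) (hab : G.Adj a b)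
    (hbc : G.Adj b c) (hac : G.Adj a c) (h : LInv G Z ({a, b, c} : Finset V)ᶜ) :
    LIRtwoLE G 3 := by
  obtain ⟨O, hO, hw⟩ := h
  set K : Finset V := {a, b, c} with hK
  have hO' := fun u v h1 h2 h3 => (hO u v h1 h2 h3).1
  have mK : ∀ x, x ∈ K ↔ x = a ∨ x = b ∨ x = c := by simp [hK]
  obtain ⟨P, hP, hPp⟩ := tri_vertex G K O hO' a b c rfl hab hac hbc.ne (card_nb G hsub a)
  obtain ⟨Q, hQ, hQp⟩ := tri_vertex G K O hO' b a c (by ext; simp [mK]; tauto) hab.symm hbc hac.ne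
    (card_nb G hsub b)
  obtain ⟨R, hR, hRp⟩ := tri_vertex G K O hO' c b a (by ext; simp [mK]; tauto) hbc.symm hac.symm
    hab.ne' (card_nb G hsub c)
  obtain ⟨p, hp, q, hq, r, hr, x, hx, y, hy, z, hz, e1, e2, e3, e4, e5, e6⟩ := ltri P hP Q hQ R hR
  obtain ⟨hp1, hp2⟩ := hPp p hp
  obtain ⟨hq1, hq2⟩ := hQp q hq
  obtain ⟨hr1, hr2⟩ := hRp r hr
  have nab := hab.ne
  have nbc := hbc.ne
  have nac := hac.ne
  set f : V → St := fun v => if v = a then p else if v = b then q else r with hf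
  have fa : f a = p := by simp [hf]
  have fb : f b = q := by simp [hf, nab.symm]
  have fc : f c = r := by simp [hf, nac.symm, nbc.symm]
  obtain ⟨w, hw1, hw2, hw3⟩ := hw (fun _ v => f v) (by
    intro u v huv hu hv
    have hu : u ∉ K := by simpa using hu
    have hv : v ∈ K := by simpa using hv
    rcases (mK v).1 hv with rfl | rfl | rfl
    · rw [fa]; exact hp1 u huv hu
    · rw [fb]; exact hq1 u huv hu
    · rw [fc]; exact hr1 u huv hu)
  set w' : Sym2 V → Fin 3 → ℕ := fun e => if e = s(a, b) then xv x else if e = s(b, c) then xv y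
    else if e = s(a, c) then xv z else w e with hw'
  have wab : w' s(a, b) = xv x := by simp [hw']
  have wbc : w' s(b, c) = xv y := by simp [hw', nab, nab.symm, nac, nac.symm, nbc, nbc.symm]
  have wac : w' s(a, c) = xv z := by simp [hw', nab, nab.symm, nac, nac.symm, nbc, nbc.symm]
  have wU : ∀ u v, u ∉ K → w' s(u, v) = w s(u, v) := by
    intro u v hu
    rw [mK] at hu
    push Not at hu
    simp [hw', hu.1, hu.2.1, hu.2.2]
  have dU : ∀ u, u ∉ K → ∀ c, colorDeg G w' c u = colorDeg G w c u := fun u hu c =>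
    colorDeg_congr G _ _ c u fun y _ => wU u y hu
  have w3 : ∀ u v, G.Adj u v → u ∉ K → v ∈ K → w' s(u, v) = xv (f v) ∧
      Mt (f v) (fun c => colorDeg G w' c u) := by
    intro u v huv hu hv
    simp only [dU u hu]
    rw [wU u v hu]
    exact hw3 u v huv (by simpa using hu) (by simpa using hv)
  have ma : a ∈ K := by simp [mK]
  have mb : b ∈ K := by simp [mK]
  have mc : c ∈ K := by simp [mK]
  have da : ∀ i, colorDeg G w' i a = (xv p + xv x + xv z) i := by
    intro i
    rw [hp2 w' (fun u hu huK => by rw [(w3 u a hu huK ma).1, fa]) i, wab, wac]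
  have db : ∀ i, colorDeg G w' i b = (xv q + xv x + xv y) i := by
    intro i
    rw [hq2 w' (fun u hu huK => by rw [(w3 u b hu huK mb).1, fb]) i, wbc, Sym2.eq_swap, wab]
  have dc : ∀ i, colorDeg G w' i c = (xv r + xv y + xv z) i := by
    intro i
    rw [hr2 w' (fun u hu huK => by rw [(w3 u c hu huK mc).1, fc]) i, Sym2.eq_swap, wbc,
      Sym2.eq_swap, wac]
  have okf : ∀ v ∈ K, Ok (f v) (fun i => colorDeg G w' i v) := by
    intro v hv
    rcases (mK v).1 hv with rfl | rfl | rfl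
    · simp only [da, fa]; exact e1
    · simp only [db, fb]; exact e2
    · simp only [dc, fc]; exact e3
  have key : ∀ u v, G.Adj u v → u ∉ K → v ∈ K → ∀ i, w' s(u, v) i ≠ 0 →
      colorDeg G w' i u ≠ colorDeg G w' i v := by
    intro u v huv hu hv i hi
    obtain ⟨h1, h2⟩ := w3 u v huv hu hv
    rw [h1] at hi
    have h4 := h2 i hi
    simp only at h4
    rw [h4]
    exact (okf v hv i hi).symm
  have kab : ∀ i, w' s(a, b) i ≠ 0 → colorDeg G w' i a ≠ colorDeg G w' i b := by
    intro i hi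
    rw [wab] at hi
    rw [da, db]
    exact e4 i hi
  have kbc : ∀ i, w' s(b, c) i ≠ 0 → colorDeg G w' i b ≠ colorDeg G w' i c := by
    intro i hi
    rw [wbc] at hi
    rw [db, dc]
    exact e5 i hi
  have kac : ∀ i, w' s(a, c) i ≠ 0 → colorDeg G w' i a ≠ colorDeg G w' i c := by
    intro i hi
    rw [wac] at hi
    rw [da, dc]
    exact e6 i hi
  have sx : ∑ i, xv x i = 2 := by rw [sum_xv]; exact ev_two _ hx
  have sy : ∑ i, xv y i = 2 := by rw [sum_xv]; exact ev_two _ hy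
  have sz : ∑ i, xv z i = 2 := by rw [sum_xv]; exact ev_two _ hz
  refine ⟨w', ?_, ?_⟩
  · intro e he
    induction e with | _ u v =>
    rw [SimpleGraph.mem_edgeSet] at he
    by_cases hu : u ∈ K
    · by_cases hv : v ∈ K
      · rw [mK] at hu hv
        rcases hu with rfl | rfl | rfl <;> rcases hv with rfl | rfl | rfl <;>
        first
        | exact absurd he G.irrefl
        | (rw [wab]; exact sx)
        | (rw [wbc]; exact sy)
        | (rw [wac]; exact sz)
        | (rw [Sym2.eq_swap, wab]; exact sx)
        | (rw [Sym2.eq_swap, wbc]; exact sy)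
        | (rw [Sym2.eq_swap, wac]; exact sz)
      · rw [Sym2.eq_swap, wU v u hv]
        exact hw1 v u he.symm (by simpa using hv)
    · rw [wU u v hu]
      exact hw1 u v he (by simpa using hu)
  · intro u v huv i hi
    have hi : w' s(u, v) i ≠ 0 := by omega
    by_cases hu : u ∈ K
    · by_cases hv : v ∈ K
      · rw [mK] at hu hv
        have hi' := hi
        rw [Sym2.eq_swap] at hi'
        rcases hu with rfl | rfl | rfl <;> rcases hv with rfl | rfl | rfl <;>
        first
        | exact absurd huv G.irrefl
        | exact kab i hi
        | exact kbc i hi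
        | exact kac i hi
        | exact (kab i hi').symm
        | exact (kbc i hi').symm
        | exact (kac i hi').symm
      · rw [Sym2.eq_swap] at hi
        exact (key v u huv.symm hv hu i hi).symm
    · by_cases hv : v ∈ K
      · exact key u v huv hu hv i hi
      · rw [dU u hu, dU v hv]
        rw [wU u v hu] at hi
        exact hw2 u v huv (by simpa using hu) (by simpa using hv) i hi

lemma dist_desc (hconn : G.Connected) (a v : V) (hv : v ≠ a) :
    ∃ y, G.Adj v y ∧ G.dist y a < G.dist v a := by
  obtain ⟨p, hp⟩ := hconn.exists_walk_length_eq_dist v a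
  cases p with
  | nil => exact absurd rfl hv
  | cons h q =>
    refine ⟨_, h, ?_⟩
    have := SimpleGraph.dist_le q
    simp only [SimpleGraph.Walk.length_cons] at hp
    omega

lemma small_case (hconn : G.Connected) (u v : V) (huv : G.Adj u v)
    (h : ∀ x y z, G.Adj x y → G.Adj x z → y = z) :
    Nonempty (G ≃g (⊤ : SimpleGraph (Fin 2))) := by
  have all : ∀ n x, G.dist x u = n → x = u ∨ x = v := by
    intro n
    induction n using Nat.strong_induction_on with
    | _ n ih =>
      intro x hx
      by_cases hxu : x = u
      · exact Or.inl hxu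
      obtain ⟨y, hy, hlt⟩ := dist_desc G hconn u x hxu
      rcases ih _ (hx ▸ hlt) y rfl with rfl | rfl
      · exact Or.inr (h y x v hy.symm huv)
      · exact Or.inl (h y x u hy.symm huv.symm)
  have all' : ∀ x, x = u ∨ x = v := fun x => all _ x rfl
  have hne := huv.ne
  refine ⟨⟨⟨fun x => if x = u then 0 else 1, fun i => if i = 0 then u else v, ?_, ?_⟩, ?_⟩⟩
  · intro x
    rcases all' x with rfl | rfl
    · simp
    · simp [hne.symm]
  · intro i
    fin_cases i
    · simp
    · simp [hne.symm]
  · intro x y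
    simp only [Equiv.coe_fn_mk, SimpleGraph.top_adj]
    rcases all' x with rfl | rfl <;> rcases all' y with rfl | rfl
    · simp
    · simp [hne.symm, huv]
    · simp [hne.symm, huv.symm]
    · simp

end

theorem lir_two_mul_subcubic {V : Type*} [Fintype V] [DecidableEq V]
    (G : SimpleGraph V) (hconn : G.Connected)
    (hsub : ∀ v : V, G.degree v ≤ 3)
    (hK2 : ¬ Nonempty (G ≃g (⊤ : SimpleGraph (Fin 2)))) :
    LIRtwoLE G 3 := by
  by_cases ht : ∃ a b c, G.Adj a b ∧ G.Adj b c ∧ G.Adj a c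
  · obtain ⟨a, b, c, hab, hbc, hac⟩ := ht
    refine fin_tri G hsub (fun _ => False) a b c hab hbc hac ?_
    refine inv_core G hsub _ _ (fun v => G.dist v a) ?_ (by simp)
    intro v hv
    exact dist_desc G hconn a v (fun h => hv (by simp [h]))
  · by_cases h2 : ∃ ρ x y, G.Adj ρ x ∧ G.Adj ρ y ∧ x ≠ y
    · obtain ⟨ρ, x, y, hx, hy, hxy⟩ := h2
      refine fin_single G ρ ?_ (card_nb G hsub ρ) ?_
      · rw [← Finset.card_pair hxy]
        refine Finset.card_le_card ?_
        intro t ht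
        simp only [Finset.mem_insert, Finset.mem_singleton] at ht
        rcases ht with rfl | rfl <;> simpa
      · refine inv_core G hsub _ _ (fun v => G.dist v ρ) ?_ ?_
        · intro v hv
          exact dist_desc G hconn ρ v (by simpa using hv)
        · intro v hv hvρ
          have key : ∀ y, G.Adj v y → (y ∈ ({ρ} : Finset V) ∨ G.dist y ρ ≤ G.dist v ρ) →
              y = ρ := by
            intro y hvy hy
            rcases hy with hy | hy
            · simpa using hy
            · by_contra hne
              rw [SimpleGraph.dist_eq_one_iff_adj.2 hvρ] at hy
              have := hconn.pos_dist_of_ne hne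
              have h1 : G.dist y ρ = 1 := by omega
              exact ht ⟨v, y, ρ, hvy, SimpleGraph.dist_eq_one_iff_adj.1 h1, hvρ⟩
          intro y y' h1 h2 h3 h4
          rw [key y h1 h3, key y' h2 h4]
    · by_cases he : ∃ u v, G.Adj u v
      · obtain ⟨u, v, huv⟩ := he
        refine absurd (small_case G hconn u v huv ?_) hK2
        intro x y z hy hz
        by_contra hne
        exact h2 ⟨x, y, z, hy, hz, hne⟩
      · push Not at he
        refine ⟨fun _ _ => 0, ?_, fun u v huv => absurd huv (he u v)⟩
        intro e hee
        induction e with | _ u v =>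
        exact absurd hee (he u v)
end

section
/- Let G be a connected simple graph with maximum degree at most 3 that is not isomorphic to K2 (the complete graph on two vertices). If the set of all vertices of degree 3 in G is an independent set (no two degree-3 vertices are adjacent), then lir(^2G) ≤ 2. -/
open scoped Classical

/-- The red degree of a vertex `x`: the sum of the red multiplicities `r e`
over all edges `e` of `G` incident with `x`. -/
noncomputable def redDeg {V : Type*} [Fintype V] [DecidableEq V]
    (G : SimpleGraph V) (r : Sym2 V → ℕ) (x : V) : ℕ :=
  ∑ e ∈ G.edgeFinset.filter (fun e => x ∈ e), r e

/-- The blue degree of a vertex `x`: the sum of `2 - r e` over all edges `e`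
of `G` incident with `x`. -/
noncomputable def blueDeg {V : Type*} [Fintype V] [DecidableEq V]
    (G : SimpleGraph V) (r : Sym2 V → ℕ) (x : V) : ℕ :=
  ∑ e ∈ G.edgeFinset.filter (fun e => x ∈ e), (2 - r e)

/-- `r : E(G) → {0,1,2}` encodes a locally irregular 2-edge-coloring of `²G`:
every edge gets a red multiplicity at most 2, and for every edge `uv`, if
`r s(u,v) ≥ 1` the red degrees of `u` and `v` differ, and if `r s(u,v) ≤ 1`
the blue degrees of `u` and `v` differ. -/
def IsLIR2 {V : Type*} [Fintype V] [DecidableEq V]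
    (G : SimpleGraph V) (r : Sym2 V → ℕ) : Prop :=
  (∀ e ∈ G.edgeSet, r e ≤ 2) ∧
  ∀ u v : V, G.Adj u v →
    (1 ≤ r s(u, v) → redDeg G r u ≠ redDeg G r v) ∧
    (r s(u, v) ≤ 1 → blueDeg G r u ≠ blueDeg G r v)

/-- `lir(²G) ≤ 2`: there is a locally irregular 2-edge-coloring of `²G`. -/
def LIRtwoLE2 {V : Type*} [Fintype V] [DecidableEq V] (G : SimpleGraph V) : Prop :=
  ∃ r : Sym2 V → ℕ, IsLIR2 G r


namespace LirAux

lemma greedy {α : Type*} [Finite α] (R : α → α → Prop) (hs : ∀ a b, R a b → R b a)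
    (C : α → Prop) (p : α → ℤ) (hp : ∀ a, p a = -1 ∨ p a = 0 ∨ p a = 1)
    (hC : ∀ a b, C a → C b → R a b → p a ≠ p b)
    (hir : ∀ a, ¬ C a → ¬ R a a)
    (hd : ∀ a, ¬ C a → ∃ b₁ b₂, ∀ b, R a b → b = b₁ ∨ b = b₂) :
    ∃ c : α → ℤ, (∀ a, c a = -1 ∨ c a = 0 ∨ c a = 1) ∧ (∀ a, C a → c a = p a) ∧
      ∀ a b, R a b → c a ≠ c b := by
  have key : ∀ S : Finset α, ∃ c : α → ℤ, (∀ a, c a = -1 ∨ c a = 0 ∨ c a = 1) ∧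
      (∀ a, C a → c a = p a) ∧
      ∀ a b, (a ∈ S ∨ C a) → (b ∈ S ∨ C b) → R a b → c a ≠ c b := by
    intro S
    induction S using Finset.induction_on with
    | empty =>
      refine ⟨p, hp, fun _ _ => rfl, ?_⟩
      intro a b ha hb
      simp at ha hb
      exact hC a b ha hb
    | insert a S _ ih =>
      obtain ⟨c, h1, h2, h3⟩ := ih
      by_cases hCa : C a
      · refine ⟨c, h1, h2, ?_⟩
        intro x y hx hy
        apply h3
        · grind
        · grind
      · obtain ⟨b₁, b₂, hb⟩ := hd a hCa
        obtain ⟨t, ht, ht1, ht2⟩ : ∃ t : ℤ, (t = -1 ∨ t = 0 ∨ t = 1) ∧ t ≠ c b₁ ∧ t ≠ c b₂ := by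
          have := h1 b₁
          have := h1 b₂
          by_cases e1 : (-1 : ℤ) ≠ c b₁ ∧ (-1 : ℤ) ≠ c b₂
          · exact ⟨-1, by simp, e1⟩
          by_cases e2 : (0 : ℤ) ≠ c b₁ ∧ (0 : ℤ) ≠ c b₂
          · exact ⟨0, by simp, e2⟩
          exact ⟨1, by simp, by omega, by omega⟩
        refine ⟨fun x => if x = a then t else c x, ?_, ?_, ?_⟩
        · intro x; dsimp only; split_ifs
          · exact ht
          · exact h1 x
        · intro x hx
          have : x ≠ a := by rintro rfl; exact hCa hx
          simp [this, h2 x hx]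
        · intro x y hx hy hxy
          have hirr := hir a hCa
          have hsy := hs x y hxy
          by_cases ex : x = a <;> by_cases ey : y = a
          · subst ex; subst ey; exact absurd hxy hirr
          · subst ex
            simp only [if_true, ey, if_false]
            rcases hb y hxy with h | h <;> rw [h] <;> assumption
          · subst ey
            simp only [if_true, ex, if_false]
            rcases hb x hsy with h | h <;> rw [h] <;> exact Ne.symm (by assumption)
          · simp only [ex, ey, if_false]
            apply h3 x y _ _ hxy
            · grind
            · grind
  cases nonempty_fintype α
  obtain ⟨c, h1, h2, h3⟩ := key Finset.univ
  exact ⟨c, h1, h2, fun a b h => h3 a b (by simp) (by simp) h⟩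

lemma maxcut {V : Type*} [Fintype V] (W : V → V → ℤ) (hW : ∀ x y, W x y = W y x)
    (h0 : ∀ x, W x x = 0) :
    ∃ ε : V → ℤ, (∀ x, ε x = 1 ∨ ε x = -1) ∧ ∀ x, ∑ y, W x y * (ε x * ε y) ≤ 0 := by
  let sg : (V → Bool) → V → ℤ := fun b x => if b x then 1 else -1
  let E : (V → ℤ) → ℤ := fun ε => ∑ x, ∑ y, W x y * (ε x * ε y)
  obtain ⟨b, hb⟩ := Finite.exists_min (fun b => E (sg b))
  refine ⟨sg b, ?_, ?_⟩
  · intro x; simp only [sg]; split_ifs <;> simp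
  intro x0
  have h := hb (Function.update b x0 (!b x0))
  set ε := sg b with hε
  let d : V → ℤ := fun y => if y = x0 then -2 * ε x0 else 0
  have hd : sg (Function.update b x0 (!b x0)) = fun y => ε y + d y := by
    funext y
    by_cases hy : y = x0
    · subst hy
      simp only [sg, d, hε, Function.update_self, if_true]
      cases b y <;> simp
    · simp [sg, d, hε, hy]
  rw [hd] at h
  have e1 : E (fun y => ε y + d y) = E ε + ∑ x, ∑ y, W x y * (d x * ε y)
      + ∑ x, ∑ y, W x y * (ε x * d y) + ∑ x, ∑ y, W x y * (d x * d y) := by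
    simp only [E, ← Finset.sum_add_distrib]
    refine Finset.sum_congr rfl fun x _ => Finset.sum_congr rfl fun y _ => by ring
  have e2 : ∑ x, ∑ y, W x y * (ε x * d y) = ∑ x, ∑ y, W x y * (d x * ε y) := by
    rw [Finset.sum_comm]
    refine Finset.sum_congr rfl fun x _ => Finset.sum_congr rfl fun y _ => by rw [hW y x]; ring
  have e3 : ∑ x, ∑ y, W x y * (d x * ε y) = -2 * ∑ y, W x0 y * (ε x0 * ε y) := by
    rw [Finset.sum_eq_single x0]
    · rw [Finset.mul_sum]
      refine Finset.sum_congr rfl fun y _ => by simp only [d, if_true]; ring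
    · intro x _ hx; simp [d, hx]
    · simp
  have e4 : ∑ x, ∑ y, W x y * (d x * d y) = 0 := by
    refine Finset.sum_eq_zero fun x _ => Finset.sum_eq_zero fun y _ => ?_
    by_cases hx : x = x0
    · by_cases hy : y = x0
      · rw [hx, hy, h0]; simp
      · simp [d, hy]
    · simp [d, hx]
  rw [e1, e2, e3, e4] at h
  linarith

section
variable {V : Type*} [Fintype V] [DecidableEq V] {G : SimpleGraph V}

lemma deg1 {w : V} (h : G.degree w = 1) : ∃ v, G.neighborFinset w = {v} :=
  Finset.card_eq_one.mp h
lemma deg2 {w : V} (h : G.degree w = 2) : ∃ a b, a ≠ b ∧ G.neighborFinset w = {a, b} :=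
  Finset.card_eq_two.mp h
lemma deg3 {w : V} (h : G.degree w = 3) :
    ∃ a b c, a ≠ b ∧ a ≠ c ∧ b ≠ c ∧ G.neighborFinset w = {a, b, c} :=
  Finset.card_eq_three.mp h

lemma nb1 {w a b : V} (h : G.degree w = 1) (ha : G.Adj w a) (hb : G.Adj w b) : a = b := by
  obtain ⟨v, hv⟩ := deg1 h
  have h1 : a ∈ G.neighborFinset w := by simpa using ha
  have h2 : b ∈ G.neighborFinset w := by simpa using hb
  rw [hv] at h1 h2
  simp at h1 h2
  rw [h1, h2]

lemma nb2 {w a b c : V} (h : G.degree w = 2) (ha : G.Adj w a) (hb : G.Adj w b)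
    (hc : G.Adj w c) (hab : a ≠ b) : c = a ∨ c = b := by
  obtain ⟨v, v', _, hv⟩ := deg2 h
  have h1 : a ∈ G.neighborFinset w := by simpa using ha
  have h2 : b ∈ G.neighborFinset w := by simpa using hb
  have h3 : c ∈ G.neighborFinset w := by simpa using hc
  rw [hv] at h1 h2 h3
  simp at h1 h2 h3
  grind

lemma sum_inc (f : Sym2 V → ℕ) (x : V) :
    ∑ e ∈ G.edgeFinset.filter (fun e => x ∈ e), f e = ∑ y ∈ G.neighborFinset x, f s(x, y) := by
  have : G.edgeFinset.filter (fun e => x ∈ e) = (G.neighborFinset x).image (fun y => s(x, y)) := by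
    ext e
    induction e using Sym2.ind with
    | _ a b =>
      simp only [Finset.mem_filter, SimpleGraph.mem_edgeFinset, SimpleGraph.mem_edgeSet,
        Finset.mem_image, SimpleGraph.mem_neighborFinset, Sym2.mem_iff, Sym2.eq_iff]
      constructor
      · rintro ⟨h, rfl | rfl⟩
        · exact ⟨b, h, by simp⟩
        · exact ⟨a, h.symm, by simp⟩
      · rintro ⟨y, h, ⟨rfl, rfl⟩ | ⟨rfl, rfl⟩⟩
        · exact ⟨h, by simp⟩
        · exact ⟨h.symm, by simp⟩
  rw [this, Finset.sum_image]
  intro a _ b _ h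
  have h' : s(x, a) = s(x, b) := h
  rw [Sym2.eq_iff] at h'
  grind

end

section
variable {V : Type*} [Fintype V] [DecidableEq V]

def Thread (G : SimpleGraph V) (u a b u' : V) : Prop :=
  G.degree u = 3 ∧ G.degree a = 2 ∧ G.degree b = 2 ∧ G.degree u' = 3 ∧
    G.Adj u a ∧ G.Adj a b ∧ G.Adj b u'

lemma Thread.symm {G : SimpleGraph V} {u a b u' : V} (h : Thread G u a b u') :
    Thread G u' b a u := by
  obtain ⟨h1, h2, h3, h4, h5, h6, h7⟩ := h
  exact ⟨h4, h3, h2, h1, h7.symm, h6.symm, h5.symm⟩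

lemma Thread.unique {G : SimpleGraph V} {u a b u' c v : V} (h : Thread G u a b u')
    (h' : Thread G u a c v) : c = b ∧ v = u' := by
  obtain ⟨h1, h2, h3, h4, h5, h6, h7⟩ := h
  obtain ⟨k1, k2, k3, k4, k5, k6, k7⟩ := h'
  have hub : u ≠ b := by rintro rfl; omega
  have huc : u ≠ c := by rintro rfl; omega
  have hau : a ≠ u' := by rintro rfl; omega
  have hav : a ≠ v := by rintro rfl; omega
  have e : c = b := by
    rcases nb2 h2 h5.symm h6 k6 hub with h | h
    · exact absurd h.symm huc
    · exact h
  subst e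
  refine ⟨rfl, ?_⟩
  rcases nb2 h3 h6.symm h7 k7 hau with h | h
  · exact absurd h.symm hav
  · exact h

lemma exists_cut (G : SimpleGraph V) : ∃ (ε : V → ℤ) (idx : V → ℕ),
    (∀ x, ε x = 1 ∨ ε x = -1) ∧ Function.Injective idx ∧
    ∀ u a b v a' b' v', Thread G u a b v → Thread G u a' b' v' → ε u = ε v → ε u = ε v' →
      idx a < idx b → idx a' < idx b' → a = a' := by
  let W : V → V → ℤ := fun u v => if u = v then 0 else ∑ a, ∑ b, if Thread G u a b v then 1 else 0
  obtain ⟨ε, hε, hc⟩ := maxcut W (by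
    intro x y
    simp only [W]
    by_cases h : x = y
    · simp [h]
    · rw [if_neg h, if_neg (Ne.symm h), Finset.sum_comm]
      refine Finset.sum_congr rfl fun a _ => Finset.sum_congr rfl fun b _ => ?_
      have : Thread G x b a y ↔ Thread G y a b x := ⟨fun h => h.symm, fun h => h.symm⟩
      simp only [this]) (by simp [W])
  refine ⟨ε, fun x => (Fintype.equivFin V x : ℕ), hε, ?_, ?_⟩
  · intro x y h
    exact (Fintype.equivFin V).injective (Fin.ext h)
  generalize (fun x => (Fintype.equivFin V x : ℕ)) = idx
  intro u a b v a' b' v' h h' he he' hi hi'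
  by_contra hne
  let g : V → ℤ := fun a => ∑ v, ∑ b, if Thread G u a b v ∧ u ≠ v then ε u * ε v else 0
  have hg : ∑ a, g a ≤ 0 := by
    have := hc u
    refine le_trans (le_of_eq ?_) this
    simp only [g]
    rw [Finset.sum_comm]
    refine Finset.sum_congr rfl fun x _ => ?_
    simp only [W]
    by_cases hux : u = x
    · simp [hux]
    · rw [if_neg hux, Finset.sum_mul]
      refine Finset.sum_congr rfl fun a _ => ?_
      rw [Finset.sum_mul]
      refine Finset.sum_congr rfl fun b _ => ?_
      simp [hux]
  have hg1 : ∀ a b v, Thread G u a b v → g a = if u ≠ v then ε u * ε v else 0 := by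
    intro a b v h
    simp only [g]
    rw [Finset.sum_eq_single v, Finset.sum_eq_single b]
    · simp [h]
    · intro c _ hcb
      rw [if_neg]
      rintro ⟨h1, _⟩
      exact hcb (h.unique h1).1
    · simp
    · intro c _ hcb
      refine Finset.sum_eq_zero fun d _ => ?_
      rw [if_neg]
      rintro ⟨h1, _⟩
      exact hcb (h.unique h1).2
    · simp
  have hg0 : ∀ a, (¬ ∃ b v, Thread G u a b v) → g a = 0 := by
    intro a h
    refine Finset.sum_eq_zero fun v _ => Finset.sum_eq_zero fun b _ => ?_
    rw [if_neg]
    rintro ⟨h1, _⟩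
    exact h ⟨b, v, h1⟩
  have hgl : ∀ a, -1 ≤ g a := by
    intro a
    by_cases h : ∃ b v, Thread G u a b v
    · obtain ⟨b, v, h⟩ := h
      rw [hg1 a b v h]
      rcases hε u with e | e <;> rcases hε v with e' | e' <;> rw [e, e'] <;> split_ifs <;> norm_num
    · rw [hg0 a h]; norm_num
  obtain ⟨z, hz⟩ : ∃ z, z ≠ a ∧ z ≠ a' ∧ G.neighborFinset u = {a, a', z} := by
    obtain ⟨x, y, z, h1, h2, h3, h4⟩ := deg3 h.1
    have m1 : a ∈ G.neighborFinset u := by simpa using h.2.2.2.2.1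
    have m2 : a' ∈ G.neighborFinset u := by simpa using h'.2.2.2.2.1
    rw [h4] at m1 m2
    simp only [Finset.mem_insert, Finset.mem_singleton] at m1 m2
    rw [h4]
    rcases m1 with rfl | rfl | rfl <;> rcases m2 with rfl | rfl | rfl
    · exact absurd rfl hne
    · exact ⟨z, by tauto, by tauto, rfl⟩
    · exact ⟨y, by tauto, by tauto, by grind⟩
    · exact ⟨z, by tauto, by tauto, by grind⟩
    · exact absurd rfl hne
    · exact ⟨x, by tauto, by tauto, by grind⟩
    · exact ⟨y, by tauto, by tauto, by grind⟩
    · exact ⟨x, by tauto, by tauto, by grind⟩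
    · exact absurd rfl hne
  obtain ⟨hz1, hz2, hN⟩ := hz
  have hsum : ∑ a, g a = g a + g a' + g z := by
    rw [← Finset.sum_subset (Finset.subset_univ (G.neighborFinset u)), hN,
      Finset.sum_insert, Finset.sum_pair (Ne.symm hz2)]
    · ring
    · simp [hne, Ne.symm hz1]
    · intro x _ hx
      apply hg0
      rintro ⟨b, v, h⟩
      apply hx
      simpa using h.2.2.2.2.1
  rw [hsum] at hg
  have hsq : ε u * ε u = 1 := by rcases hε u with e | e <;> rw [e] <;> norm_num
  have hb_in : v = u → b = a ∨ b = a' ∨ b = z := by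
    rintro rfl
    have : b ∈ G.neighborFinset v := by simpa using h.2.2.2.2.2.2.symm
    rw [hN] at this; simpa using this
  have hb_in' : v' = u → b' = a ∨ b' = a' ∨ b' = z := by
    rintro rfl
    have : b' ∈ G.neighborFinset v' := by simpa using h'.2.2.2.2.2.2.symm
    rw [hN] at this; simpa using this
  have ga := hg1 a b v h
  have ga' := hg1 a' b' v' h'
  rw [← he, hsq] at ga
  rw [← he', hsq] at ga'
  have gz := hgl z
  -- a loop must use the third neighbour
  have loopz : v = u → b = z := by
    intro e
    rcases hb_in e with h1 | h1 | h1
    · subst h1; omega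
    · subst h1; subst e
      have := (h.symm.unique h').1
      subst this; omega
    · exact h1
  have loopz' : v' = u → b' = z := by
    intro e
    rcases hb_in' e with h1 | h1 | h1
    · subst h1; subst e
      have := (h'.symm.unique h).1
      subst this; omega
    · subst h1; omega
    · exact h1
  by_cases e : v = u <;> by_cases e' : v' = u
  · have l := loopz e
    have l' := loopz' e'
    subst l; subst l'; subst e; subst e'
    exact hne (h'.symm.unique h.symm).1
  · have l := loopz e
    subst l; subst e
    have := hg1 _ _ _ h.symm
    simp at this
    rw [if_pos (Ne.symm e')] at ga'
    simp at ga
    omega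
  · have l' := loopz' e'
    subst l'; subst e'
    have := hg1 _ _ _ h'.symm
    simp at this
    rw [if_pos (Ne.symm e)] at ga
    simp at ga'
    omega
  · rw [if_pos (Ne.symm e)] at ga
    rw [if_pos (Ne.symm e')] at ga'
    omega

end

section
variable {V : Type*} [Fintype V] [DecidableEq V]

def Tgt (G : SimpleGraph V) (x u : V) (f : Sym2 V) : Prop :=
  ∃ v y, f = s(v, y) ∧ G.Adj x u ∧ G.Adj u v ∧ G.Adj v y ∧ x ≠ v ∧ u ≠ y ∧
    G.degree u = 2 ∧ G.degree v = 2

def FF (G : SimpleGraph V) (e f : Sym2 V) : Prop := ∃ x u, e = s(x, u) ∧ Tgt G x u f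

def CC (G : SimpleGraph V) (e : Sym2 V) : Prop := ∃ u a, e = s(u, a) ∧ G.Adj u a ∧ G.degree u = 3

def Pen (G : SimpleGraph V) (e f : Sym2 V) : Prop :=
  ∃ w v x, e = s(w, v) ∧ f = s(v, x) ∧ G.degree w = 1 ∧ G.degree v = 2 ∧ G.Adj w v ∧ G.Adj v x ∧
    x ≠ w ∧ (CC G f ∨ ∃ g, FF G f g)

lemma FF.symm {G : SimpleGraph V} {e f : Sym2 V} (h : FF G e f) : FF G f e := by
  obtain ⟨x, u, rfl, v, y, rfl, h1, h2, h3, h4, h5, h6, h7⟩ := h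
  exact ⟨y, v, Sym2.eq_swap, u, x, Sym2.eq_swap, h3.symm, h2.symm, h1.symm, h5.symm, h4.symm, h7, h6⟩

lemma Tgt.unique {G : SimpleGraph V} {x u : V} {f f' : Sym2 V} (h : Tgt G x u f)
    (h' : Tgt G x u f') : f = f' := by
  obtain ⟨v, y, rfl, h1, h2, h3, h4, h5, h6, h7⟩ := h
  obtain ⟨v', y', rfl, k1, k2, k3, k4, k5, k6, k7⟩ := h'
  have e : v' = v := by
    rcases nb2 h6 h1.symm h2 k2 h4 with h | h
    · exact absurd h.symm k4
    · exact h
  subst e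
  rcases nb2 h7 h2.symm h3 k3 h5 with h | h
  · exact absurd h.symm k5
  · rw [h]

lemma FF.irrefl {G : SimpleGraph V} {e : Sym2 V} (h : FF G e e) : False := by
  obtain ⟨x, u, rfl, v, y, h0, h1, h2, h3, h4, h5, h6, h7⟩ := h
  rw [Sym2.eq_iff] at h0
  rcases h0 with ⟨rfl, rfl⟩ | ⟨rfl, rfl⟩
  · exact h4 rfl
  · exact h2.ne rfl

lemma Pen.unique {G : SimpleGraph V} {e f f' : Sym2 V} (h : Pen G e f)
    (h' : Pen G e f') : f = f' := by
  obtain ⟨w, v, x, rfl, rfl, h1, h2, h3, h4, h5, _⟩ := h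
  obtain ⟨w', v', x', h0, rfl, k1, k2, k3, k4, k5, _⟩ := h'
  rw [Sym2.eq_iff] at h0
  rcases h0 with ⟨rfl, rfl⟩ | ⟨rfl, rfl⟩
  · rcases nb2 h2 h3.symm h4 k4 h5.symm with h | h
    · exact absurd h k5
    · rw [h]
  · omega

/-- exits of a leaf edge go through its non-leaf end -/
lemma FF.of_leaf {G : SimpleGraph V} {w v : V} {f : Sym2 V} (h : FF G s(w, v) f)
    (hw : G.degree w = 1) : Tgt G w v f := by
  obtain ⟨x, u, h0, ht⟩ := h
  rw [Sym2.eq_iff] at h0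
  rcases h0 with ⟨rfl, rfl⟩ | ⟨rfl, rfl⟩
  · exact ht
  · obtain ⟨v, y, rfl, h1, h2, h3, h4, h5, h6, h7⟩ := ht
    omega

lemma Tgt.deg_of {G : SimpleGraph V} {x u z : V} {f : Sym2 V} (h : Tgt G x u f)
    (hz : G.Adj u z) (hzx : z ≠ x) : G.degree z = 2 := by
  obtain ⟨v, y, rfl, h1, h2, h3, h4, h5, h6, h7⟩ := h
  rcases nb2 h6 h1.symm h2 hz h4 with h | h
  · exact absurd h hzx
  · rw [h]; exact h7

/-- a penultimate edge exits only through its inner end -/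
lemma FF.of_pen {G : SimpleGraph V} {w v x : V} {f : Sym2 V} (h : FF G s(v, x) f)
    (hw : G.degree w = 1) (hwv : G.Adj w v) (hx : x ≠ w) : Tgt G v x f := by
  obtain ⟨a, u, h0, ht⟩ := h
  rw [Sym2.eq_iff] at h0
  rcases h0 with ⟨rfl, rfl⟩ | ⟨rfl, rfl⟩
  · exact ht
  · have := ht.deg_of hwv.symm hx.symm
    omega

noncomputable def kap (G : SimpleGraph V) (e : Sym2 V) : Sym2 V :=
  if h : ∃ f, Pen G e f then h.choose else e

lemma kap_pen {G : SimpleGraph V} {e f : Sym2 V} (h : Pen G e f) : kap G e = f := by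
  have h' : ∃ f, Pen G e f := ⟨f, h⟩
  unfold kap
  rw [dif_pos h']
  exact h'.choose_spec.unique h

lemma kap_not {G : SimpleGraph V} {e : Sym2 V} (h : ¬ ∃ f, Pen G e f) : kap G e = e := by
  unfold kap
  rw [dif_neg h]

lemma kap_cases (G : SimpleGraph V) (e : Sym2 V) : kap G e = e ∨ Pen G e (kap G e) := by
  by_cases h : ∃ f, Pen G e f
  · obtain ⟨f, hf⟩ := h
    right; rw [kap_pen hf]; exact hf
  · left; exact kap_not h

def RR (G : SimpleGraph V) (a b : Sym2 V) : Prop := ∃ e f, kap G e = a ∧ kap G f = b ∧ FF G e f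

lemma RR.symm {G : SimpleGraph V} {a b : Sym2 V} (h : RR G a b) : RR G b a := by
  obtain ⟨e, f, h1, h2, h3⟩ := h
  exact ⟨f, e, h2, h1, h3.symm⟩

lemma kap_CC {G : SimpleGraph V} {e : Sym2 V} (h : CC G e) : kap G e = e := by
  apply kap_not
  rintro ⟨f, w, v, x, rfl, rfl, h1, h2, h3, h4, h5, _⟩
  obtain ⟨u, a, h0, -, hu⟩ := h
  rw [Sym2.eq_iff] at h0
  rcases h0 with ⟨rfl, rfl⟩ | ⟨rfl, rfl⟩ <;> omega

/-- if the key is cubic, and the edge has an exit, then the edge is its own key -/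
lemma kap_eq_of_CC {G : SimpleGraph V} {e f : Sym2 V} (h : CC G (kap G e)) (hF : FF G e f) :
    kap G e = e := by
  rcases kap_cases G e with h' | h'
  · exact h'
  exfalso
  obtain ⟨w, v, x, rfl, h0, h1, h2, h3, h4, h5, _⟩ := h'
  rw [h0] at h
  have hx := (hF.of_leaf h1).deg_of h4 h5
  obtain ⟨u, a, h0, -, hu⟩ := h
  rw [Sym2.eq_iff] at h0
  rcases h0 with ⟨rfl, rfl⟩ | ⟨rfl, rfl⟩ <;> omega

lemma RR.irrefl {G : SimpleGraph V} {a : Sym2 V} (hC : ¬ CC G a) (h : RR G a a) : False := by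
  -- an edge attached to a leaf edge with the same key
  have aux : ∀ e, Pen G e a → FF G e a → False := by
    rintro e ⟨w, v, x, rfl, rfl, h1, h2, h3, h4, h5, _⟩ hF
    obtain ⟨z, y, h0, k1, k2, k3, k4, k5, k6, k7⟩ := hF.of_leaf h1
    rw [Sym2.eq_iff] at h0
    rcases h0 with ⟨rfl, rfl⟩ | ⟨rfl, rfl⟩
    · exact k2.ne rfl
    · exact k5 rfl
  obtain ⟨e, f, he, hf, hF⟩ := h
  rcases kap_cases G e with h | h <;> rcases kap_cases G f with h' | h' <;> rw [he] at h <;>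
    rw [hf] at h'
  · subst h; subst h'; exact hF.irrefl
  · subst h; exact aux f h' hF.symm
  · subst h'; exact aux e h hF
  · obtain ⟨w, v, x, rfl, rfl, h1, h2, h3, h4, h5, h6⟩ := h
    obtain ⟨w', v', x', rfl, h0, k1, k2, k3, k4, k5, k6⟩ := h'
    rw [Sym2.eq_iff] at h0
    rcases h0 with ⟨rfl, rfl⟩ | ⟨rfl, rfl⟩
    · have : w' = w := by
        rcases nb2 h2 h3.symm h4 k3.symm h5.symm with h | h
        · exact h
        · exact absurd h.symm k5
      subst this
      exact hF.irrefl
    · rcases h6 with h6 | ⟨g, h6⟩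
      · exact hC h6
      · have := (h6.of_pen h1 h3 h5).deg_of k3.symm k5.symm
        omega

def Slot (G : SimpleGraph V) (y x : V) (f : Sym2 V) : Prop :=
  Tgt G y x f ∨ ∃ w, G.degree w = 1 ∧ G.degree x = 2 ∧ w ≠ y ∧ G.Adj w x ∧ G.Adj x y ∧ Tgt G w x f

lemma Slot.unique {G : SimpleGraph V} {y x : V} {f f' : Sym2 V} (h : Slot G y x f)
    (h' : Slot G y x f') : f = f' := by
  rcases h with h | ⟨w, h1, h2, h3, h4, h5, h6⟩ <;>
    rcases h' with h' | ⟨w', k1, k2, k3, k4, k5, k6⟩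
  · exact h.unique h'
  · have := h.deg_of k4.symm k3; omega
  · have := h'.deg_of h4.symm h3; omega
  · have : w' = w := by
      rcases nb2 h2 h4.symm h5 k4.symm h3 with h | h
      · exact h
      · exact absurd h k3
    subst this
    exact h6.unique k6

lemma RR.bound (G : SimpleGraph V) (a : Sym2 V) :
    ∃ b₁ b₂, ∀ b, RR G a b → b = b₁ ∨ b = b₂ := by
  induction a using Sym2.ind with
  | _ x y =>
    have key : ∀ b, RR G s(x, y) b → (∃ f, Slot G y x f ∧ b = kap G f) ∨
        (∃ f, Slot G x y f ∧ b = kap G f) := by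
      rintro b ⟨e, f, he, rfl, hF⟩
      rcases kap_cases G e with h | h
      · rw [he] at h
        subst h
        obtain ⟨p, q, h0, ht⟩ := hF
        rw [Sym2.eq_iff] at h0
        rcases h0 with ⟨rfl, rfl⟩ | ⟨rfl, rfl⟩
        · exact Or.inr ⟨f, Or.inl ht, rfl⟩
        · exact Or.inl ⟨f, Or.inl ht, rfl⟩
      · rw [he] at h
        obtain ⟨w, v, z, rfl, h0, h1, h2, h3, h4, h5, h6⟩ := h
        rw [Sym2.eq_iff] at h0
        rcases h0 with ⟨rfl, rfl⟩ | ⟨rfl, rfl⟩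
        · exact Or.inl ⟨f, Or.inr ⟨w, h1, h2, h5.symm, h3, h4, hF.of_leaf h1⟩, rfl⟩
        · exact Or.inr ⟨f, Or.inr ⟨w, h1, h2, h5.symm, h3, h4, hF.of_leaf h1⟩, rfl⟩
    have pick : ∀ p q : V, ∃ b₁, ∀ f, Slot G p q f → kap G f = b₁ := by
      intro p q
      by_cases h : ∃ f, Slot G p q f
      · obtain ⟨f, hf⟩ := h
        exact ⟨kap G f, fun f' hf' => by rw [hf.unique hf']⟩
      · exact ⟨s(p, q), fun f hf => absurd ⟨f, hf⟩ h⟩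
    obtain ⟨b₁, h1⟩ := pick y x
    obtain ⟨b₂, h2⟩ := pick x y
    refine ⟨b₁, b₂, fun b hb => ?_⟩
    rcases key b hb with ⟨f, hf, rfl⟩ | ⟨f, hf, rfl⟩
    · exact Or.inl (h1 f hf)
    · exact Or.inr (h2 f hf)

theorem exists_label (G : SimpleGraph V)
    (hindep : ∀ u v : V, G.degree u = 3 → G.degree v = 3 → ¬ G.Adj u v) :
    ∃ (s : Sym2 V → ℤ) (ε : V → ℤ), (∀ e, s e = -1 ∨ s e = 0 ∨ s e = 1) ∧
      (∀ x u v y, G.Adj x u → G.Adj u v → G.Adj v y → x ≠ v → u ≠ y → G.degree u = 2 →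
        G.degree v = 2 → s s(x, u) ≠ s s(v, y)) ∧
      (∀ w v x, G.degree w = 1 → G.degree v = 2 → G.Adj w v → G.Adj v x → x ≠ w →
        s s(v, x) = 0 ∨ s s(w, v) = s s(v, x)) ∧
      (∀ x, ε x = 1 ∨ ε x = -1) ∧
      (∀ u a, G.degree u = 3 → G.Adj u a → s s(u, a) = ε u ∨
        (s s(u, a) = 0 ∧ G.degree a = 2 ∧ ∀ x, G.Adj a x → x ≠ u → s s(a, x) = 0)) ∧
      (∀ u a a', G.degree u = 3 → G.Adj u a → G.Adj u a' → s s(u, a) = 0 → s s(u, a') = 0 →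
        a = a') := by
  obtain ⟨ε, idx, hε, hidx, hcut⟩ := exists_cut G
  let Z : Sym2 V → Prop := fun e => ∃ u a b v, e = s(u, a) ∧ Thread G u a b v ∧ ε u = ε v ∧
    idx a < idx b
  let q : Sym2 V → ℤ := fun e => if Z e then 0 else
    if ∃ u, u ∈ e ∧ G.degree u = 3 ∧ ε u = 1 then 1 else -1
  have hq3 : ∀ e, q e = -1 ∨ q e = 0 ∨ q e = 1 := by
    intro e; simp only [q]; split_ifs <;> simp
  have hqn : ∀ u a, G.degree u = 3 → G.Adj u a → ¬ Z s(u, a) → q s(u, a) = ε u := by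
    intro u a hu hua hZ
    simp only [q]
    rw [if_neg hZ]
    rcases hε u with h | h
    · rw [if_pos ⟨u, by simp, hu, h⟩, h]
    · rw [if_neg, h]
      rintro ⟨x, hx, hx3, hx1⟩
      rw [Sym2.mem_iff] at hx
      rcases hx with rfl | rfl
      · omega
      · exact hindep _ _ hu hx3 hua
  have hqz : ∀ e, Z e → q e = 0 := by
    intro e h; simp only [q]; rw [if_pos h]
  have hZ : ∀ u a, G.degree u = 3 → Z s(u, a) → ∃ b v, Thread G u a b v ∧ ε u = ε v ∧
      idx a < idx b := by
    rintro u a hu ⟨u', a', b, v, h0, h1, h2⟩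
    rw [Sym2.eq_iff] at h0
    rcases h0 with ⟨rfl, rfl⟩ | ⟨rfl, rfl⟩
    · exact ⟨b, v, h1, h2⟩
    · have := h1.2.1; omega
  have hthread : ∀ u a b v, Thread G u a b v → q s(u, a) ≠ q s(v, b) := by
    intro u a b v h
    have h' := h.symm
    by_cases z1 : Z s(u, a) <;> by_cases z2 : Z s(v, b)
    · exfalso
      obtain ⟨b1, v1, t1, _, i1⟩ := hZ _ _ h.1 z1
      obtain ⟨b2, v2, t2, _, i2⟩ := hZ _ _ h'.1 z2
      have := (h.unique t1).1
      have := (h'.unique t2).1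
      subst b1; subst b2; omega
    · rw [hqz _ z1, hqn v b h'.1 h'.2.2.2.2.1 z2]
      rcases hε v with e | e <;> rw [e] <;> norm_num
    · rw [hqz _ z2, hqn u a h.1 h.2.2.2.2.1 z1]
      rcases hε u with e | e <;> rw [e] <;> norm_num
    · rw [hqn v b h'.1 h'.2.2.2.2.1 z2, hqn u a h.1 h.2.2.2.2.1 z1]
      intro e
      have hab : a ≠ b := h.2.2.2.2.2.1.ne
      rcases lt_or_gt_of_ne (fun h => hab (hidx h)) with i | i
      · exact z1 ⟨u, a, b, v, rfl, h, e, i⟩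
      · exact z2 ⟨v, b, a, u, rfl, h', e.symm, i⟩
  obtain ⟨c, hc3, hcq, hcR⟩ := greedy (RR G) (fun _ _ h => h.symm) (CC G) q hq3 (by
    rintro a b hCa hCb ⟨e, f, rfl, rfl, hF⟩
    have ea := kap_eq_of_CC hCa hF
    have eb := kap_eq_of_CC hCb hF.symm
    rw [ea] at hCa ⊢
    rw [eb] at hCb ⊢
    obtain ⟨x, u, rfl, v, y, rfl, h1, h2, h3, h4, h5, h6, h7⟩ := hF
    have hx : G.degree x = 3 := by
      obtain ⟨p, r, h0, -, hp⟩ := hCa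
      rw [Sym2.eq_iff] at h0
      rcases h0 with ⟨rfl, rfl⟩ | ⟨rfl, rfl⟩ <;> omega
    have hy : G.degree y = 3 := by
      obtain ⟨p, r, h0, -, hp⟩ := hCb
      rw [Sym2.eq_iff] at h0
      rcases h0 with ⟨rfl, rfl⟩ | ⟨rfl, rfl⟩ <;> omega
    rw [Sym2.eq_swap (a := v)]
    exact hthread x u v y ⟨hx, h6, h7, hy, h1, h2, h3⟩) (fun a h => RR.irrefl h)
    (fun a _ => RR.bound G a)
  let t : Sym2 V → ℤ := fun a => if CC G a ∨ ∃ b, RR G a b then c a else 0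
  have ht3 : ∀ a, t a = -1 ∨ t a = 0 ∨ t a = 1 := by
    intro a; simp only [t]; split_ifs
    · exact hc3 a
    · simp
  have htC : ∀ e, CC G e → t (kap G e) = q e := by
    intro e h
    rw [kap_CC h]; simp only [t]
    rw [if_pos (Or.inl h), hcq e h]
  -- isolated non-cubic edges get label zero
  have ht0 : ∀ e, ¬ CC G e → (∀ g, ¬ FF G e g) → kap G e = e → t (kap G e) = 0 := by
    intro e h1 h2 h3
    rw [h3]; simp only [t]
    rw [if_neg]
    rintro (h | ⟨b, f, g, hf, _, hF⟩)
    · exact h1 h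
    · rcases kap_cases G f with h | h
      · rw [hf] at h; subst h; exact h2 g hF
      · rw [hf] at h
        obtain ⟨w, v, x, _, _, _, _, _, _, _, h | ⟨g, h⟩⟩ := h
        · exact h1 h
        · exact h2 g h
  refine ⟨fun e => t (kap G e), ε, fun e => ht3 _, ?_, ?_, hε, ?_, ?_⟩
  · intro x u v y h1 h2 h3 h4 h5 h6 h7
    have hF : FF G s(x, u) s(v, y) := ⟨x, u, rfl, v, y, rfl, h1, h2, h3, h4, h5, h6, h7⟩
    have hR : RR G (kap G s(x, u)) (kap G s(v, y)) := ⟨_, _, rfl, rfl, hF⟩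
    simp only [t]
    rw [if_pos (Or.inr ⟨_, hR⟩), if_pos (Or.inr ⟨_, hR.symm⟩)]
    exact hcR _ _ hR
  · intro w v x h1 h2 h3 h4 h5
    have hk : kap G s(v, x) = s(v, x) := by
      apply kap_not
      rintro ⟨f, w', v', x', h0, rfl, k1, k2, k3, k4, k5, k6⟩
      rw [Sym2.eq_iff] at h0
      rcases h0 with ⟨rfl, rfl⟩ | ⟨rfl, rfl⟩
      · omega
      · have e : x' = w := by
          rcases nb2 h2 h3.symm h4 k4 h5.symm with h | h
          · exact h
          · exact absurd h k5
        subst e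
        rcases k6 with ⟨p, r, h0, -, hp⟩ | ⟨g, k6⟩
        · rw [Sym2.eq_iff] at h0
          rcases h0 with ⟨rfl, rfl⟩ | ⟨rfl, rfl⟩ <;> omega
        · obtain ⟨_, _, _, _, _, _, _, _, h, _⟩ := k6.of_pen k1 k3 k5
          omega
    by_cases hp : CC G s(v, x) ∨ ∃ g, FF G s(v, x) g
    · right
      dsimp only
      rw [hk, kap_pen ⟨w, v, x, rfl, rfl, h1, h2, h3, h4, h5, hp⟩]
    · left
      push Not at hp
      exact ht0 _ hp.1 hp.2 hk
  · intro u a hu hua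
    dsimp only
    rw [htC _ ⟨u, a, rfl, hua, hu⟩]
    by_cases z : Z s(u, a)
    · right
      obtain ⟨b, v, h, _⟩ := hZ u a hu z
      refine ⟨hqz _ z, h.2.1, ?_⟩
      intro x hax hxu
      obtain ⟨h1, h2, h3, h4, h5, h6, h7⟩ := h
      have e : x = b := by
        rcases nb2 h2 h5.symm h6 hax (by rintro rfl; omega) with h | h
        · exact absurd h hxu
        · exact h
      subst e
      apply ht0
      · rintro ⟨p, r, h0, -, hp⟩
        rw [Sym2.eq_iff] at h0
        rcases h0 with ⟨rfl, rfl⟩ | ⟨rfl, rfl⟩ <;> omega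
      · rintro g ⟨p, r, h0, ht⟩
        rw [Sym2.eq_iff] at h0
        rcases h0 with ⟨rfl, rfl⟩ | ⟨rfl, rfl⟩
        · have := ht.deg_of h7 (by rintro rfl; omega)
          omega
        · have := ht.deg_of h5.symm (by rintro rfl; omega)
          omega
      · apply kap_not
        rintro ⟨f, w', v', x', h0, rfl, k1, k2, k3, k4, k5, k6⟩
        rw [Sym2.eq_iff] at h0
        rcases h0 with ⟨rfl, rfl⟩ | ⟨rfl, rfl⟩ <;> omega
    · left; exact hqn u a hu hua z
  · intro u a a' hu h h' e e'
    dsimp only at e e'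
    rw [htC _ ⟨u, a, rfl, h, hu⟩] at e
    rw [htC _ ⟨u, a', rfl, h', hu⟩] at e'
    have z : Z s(u, a) := by
      by_contra z
      rw [hqn u a hu h z] at e
      have := hε u; omega
    have z' : Z s(u, a') := by
      by_contra z
      rw [hqn u a' hu h' z] at e'
      have := hε u; omega
    obtain ⟨b, v, t1, e1, i1⟩ := hZ u a hu z
    obtain ⟨b', v', t1', e1', i1'⟩ := hZ u a' hu z'
    exact hcut u a b v a' b' v' t1 t1' e1 e1' i1 i1'

end


section
variable {V : Type*} [Fintype V] [DecidableEq V]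

lemma sum1 {G : SimpleGraph V} {w v : V} (f : Sym2 V → ℕ) (h : G.degree w = 1) (hv : G.Adj w v) :
    ∑ e ∈ G.edgeFinset.filter (fun e => w ∈ e), f e = f s(w, v) := by
  obtain ⟨a, ha⟩ := deg1 h
  have h1 : v ∈ G.neighborFinset w := by simpa using hv
  rw [ha] at h1
  simp at h1
  subst h1
  rw [sum_inc, ha, Finset.sum_singleton]

lemma sum2 {G : SimpleGraph V} {v a : V} (h : G.degree v = 2) (ha : G.Adj v a) :
    ∃ b, b ≠ a ∧ G.Adj v b ∧ ∀ f : Sym2 V → ℕ,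
    ∑ e ∈ G.edgeFinset.filter (fun e => v ∈ e), f e = f s(v, a) + f s(v, b) := by
  obtain ⟨p, q, hpq, hN⟩ := deg2 h
  have h1 : a ∈ G.neighborFinset v := by simpa using ha
  have hp : G.Adj v p := by
    have : p ∈ G.neighborFinset v := by simp [hN]
    simpa using this
  have hq : G.Adj v q := by
    have : q ∈ G.neighborFinset v := by simp [hN]
    simpa using this
  rw [hN] at h1
  simp only [Finset.mem_insert, Finset.mem_singleton] at h1
  rcases h1 with rfl | rfl
  · exact ⟨q, hpq.symm, hq, fun f => by rw [sum_inc, hN, Finset.sum_pair hpq]⟩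
  · exact ⟨p, hpq, hp, fun f => by rw [sum_inc, hN, Finset.sum_pair hpq, add_comm]⟩

lemma sum3 {G : SimpleGraph V} {v a : V} (h : G.degree v = 3) (ha : G.Adj v a) :
    ∃ b c, b ≠ a ∧ c ≠ a ∧ b ≠ c ∧ G.Adj v b ∧ G.Adj v c ∧ ∀ f : Sym2 V → ℕ,
    ∑ e ∈ G.edgeFinset.filter (fun e => v ∈ e), f e = f s(v, a) + f s(v, b) + f s(v, c) := by
  obtain ⟨p, q, t, hpq, hpt, hqt, hN⟩ := deg3 h
  have h1 : a ∈ G.neighborFinset v := by simpa using ha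
  have hp : G.Adj v p := by
    have : p ∈ G.neighborFinset v := by simp [hN]
    simpa using this
  have hq : G.Adj v q := by
    have : q ∈ G.neighborFinset v := by simp [hN]
    simpa using this
  have ht : G.Adj v t := by
    have : t ∈ G.neighborFinset v := by simp [hN]
    simpa using this
  rw [hN] at h1
  have hs : ∀ f : Sym2 V → ℕ, ∑ e ∈ G.edgeFinset.filter (fun e => v ∈ e), f e =
      f s(v, p) + f s(v, q) + f s(v, t) := by
    intro f
    rw [sum_inc, hN, Finset.sum_insert (by simp [hpq, hpt]), Finset.sum_pair hqt, add_assoc]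
  simp only [Finset.mem_insert, Finset.mem_singleton] at h1
  rcases h1 with rfl | rfl | rfl
  · exact ⟨q, t, hpq.symm, hpt.symm, hqt, hq, ht, hs⟩
  · exact ⟨p, t, hpq, hqt.symm, hpt, hp, ht, fun f => by rw [hs]; ring⟩
  · exact ⟨p, q, hpt, hqt, hpq, hp, hq, fun f => by rw [hs]; ring⟩

lemma no_K2 {G : SimpleGraph V} (hconn : G.Connected)
    (hK2 : ¬ Nonempty (G ≃g (⊤ : SimpleGraph (Fin 2)))) {u v : V} (h : G.Adj u v)
    (hu : G.degree u = 1) (hv : G.degree v = 1) : False := by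
  have hall : ∀ x, x = u ∨ x = v := by
    intro x
    obtain ⟨p⟩ := hconn.preconnected x u
    induction p with
    | nil => exact Or.inl rfl
    | cons hab p ih =>
      rcases ih h hu with rfl | rfl
      · exact Or.inr (nb1 hu hab.symm h)
      · exact Or.inl (nb1 hv hab.symm h.symm)
  apply hK2
  have hcard : Fintype.card V = 2 := by
    have : (Finset.univ : Finset V) = {u, v} := by
      ext x; simpa using hall x
    rw [← Finset.card_univ, this, Finset.card_pair h.ne]
  refine ⟨⟨Fintype.equivFinOfCardEq hcard, ?_⟩⟩
  intro a b
  simp only [SimpleGraph.top_adj, ne_eq, EmbeddingLike.apply_eq_iff_eq]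
  constructor
  · intro hab
    rcases hall a with rfl | rfl <;> rcases hall b with rfl | rfl
    · exact absurd rfl hab
    · exact h
    · exact h.symm
    · exact absurd rfl hab
  · intro hab
    exact hab.ne

end

end LirAux

/-- If `G` is a connected subcubic simple graph not isomorphic to `K₂` in
which the vertices of degree 3 form an independent set, then `lir(²G) ≤ 2`. -/
theorem lir_two_mul_subcubic_indep {V : Type*} [Fintype V] [DecidableEq V]
    (G : SimpleGraph V) (hconn : G.Connected)
    (hsub : ∀ v : V, G.degree v ≤ 3)
    (hindep : ∀ u v : V, G.degree u = 3 → G.degree v = 3 → ¬ G.Adj u v)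
    (hK2 : ¬ Nonempty (G ≃g (⊤ : SimpleGraph (Fin 2)))) :
    LIRtwoLE2 G := by
  obtain ⟨s, ε, hs3, h22, h12, hε, h3, hz⟩ := LirAux.exists_label G hindep
  let r : Sym2 V → ℕ := fun e => (s e + 1).toNat
  have hr : ∀ e, (r e : ℤ) = s e + 1 := by
    intro e
    have := hs3 e
    simp only [r]; omega
  clear_value r
  have main : ∀ u v : V, G.Adj u v → G.degree u ≤ G.degree v →
      (1 ≤ r s(u, v) → redDeg G r u ≠ redDeg G r v) ∧
      (r s(u, v) ≤ 1 → blueDeg G r u ≠ blueDeg G r v) := by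
    intro u v huv hle
    have hu0 : 0 < G.degree u := by
      rw [G.degree_pos_iff_exists_adj]; exact ⟨v, huv⟩
    have hv3 := hsub v
    unfold redDeg blueDeg
    have hcases : (G.degree u = 1 ∧ G.degree v = 1) ∨ (G.degree u = 1 ∧ G.degree v = 2) ∨
        (G.degree u = 2 ∧ G.degree v = 2) ∨ (G.degree u ≤ 2 ∧ G.degree v = 3) ∨
        (G.degree u = 3 ∧ G.degree v = 3) := by omega
    have e0 : s(v, u) = s(u, v) := Sym2.eq_swap
    have a0 := hr s(u, v)
    have b0 := hs3 s(u, v)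
    rcases hcases with ⟨hu, hv⟩ | ⟨hu, hv⟩ | ⟨hu, hv⟩ | ⟨hu, hv⟩ | ⟨hu, hv⟩
    · exact (LirAux.no_K2 hconn hK2 huv hu hv).elim
    · obtain ⟨x, hx, hvx, hsum⟩ := LirAux.sum2 hv huv.symm
      rw [LirAux.sum1 r hu huv, LirAux.sum1 _ hu huv, hsum, hsum, e0]
      have := h12 u v x hu hv huv hvx hx
      have a1 := hr s(v, x)
      have b1 := hs3 s(v, x)
      omega
    · obtain ⟨x, hx, hux, hsum⟩ := LirAux.sum2 hu huv
      obtain ⟨y, hy, hvy, hsum'⟩ := LirAux.sum2 hv huv.symm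
      rw [hsum, hsum, hsum', hsum', e0]
      have := h22 x u v y hux.symm huv hvy hx hy.symm hu hv
      rw [Sym2.eq_swap] at this
      have a1 := hr s(u, x)
      have b1 := hs3 s(u, x)
      have a2 := hr s(v, y)
      have b2 := hs3 s(v, y)
      omega
    · obtain ⟨x, y, hx, hy, hxy, hvx, hvy, hsum⟩ := LirAux.sum3 hv huv.symm
      rw [hsum, hsum, e0]
      have c0 := h3 v u hv huv.symm
      rw [e0] at c0
      have c1 := h3 v x hv hvx
      have c2 := h3 v y hv hvy
      have d1 := hz v u x hv huv.symm hvx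
      have d2 := hz v u y hv huv.symm hvy
      have d3 := hz v x y hv hvx hvy
      rw [e0] at d1 d2
      have d1 : ¬ (s s(u, v) = 0 ∧ s s(v, x) = 0) := fun h => hx (d1 h.1 h.2).symm
      have d2 : ¬ (s s(u, v) = 0 ∧ s s(v, y) = 0) := fun h => hy (d2 h.1 h.2).symm
      have d3 : ¬ (s s(v, x) = 0 ∧ s s(v, y) = 0) := fun h => hxy (d3 h.1 h.2)
      have a1 := hr s(v, x)
      have a2 := hr s(v, y)
      have ev := hε v
      have c1 : s s(v, x) = ε v ∨ s s(v, x) = 0 := c1.imp id (fun h => h.1)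
      have c2 : s s(v, y) = ε v ∨ s s(v, y) = 0 := c2.imp id (fun h => h.1)
      by_cases hu1 : G.degree u = 1
      · rw [LirAux.sum1 r hu1 huv, LirAux.sum1 _ hu1 huv]
        have c0 : s s(u, v) = ε v := by
          rcases c0 with h | h
          · exact h
          · omega
        rcases ev with ev | ev <;> rcases c1 with c1 | c1 <;> rcases c2 with c2 | c2 <;> omega
      · obtain ⟨z, hzv, huz, hsum'⟩ := LirAux.sum2 (v := u) (by omega) huv
        rw [hsum', hsum']
        have a3 := hr s(u, z)
        have b3 := hs3 s(u, z)
        have c0 : s s(u, v) = ε v ∨ (s s(u, v) = 0 ∧ s s(u, z) = 0) := by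
          rcases c0 with h | h
          · exact Or.inl h
          · exact Or.inr ⟨h.1, h.2.2 z huz hzv⟩
        rcases ev with ev | ev <;> rcases c1 with c1 | c1 <;> rcases c2 with c2 | c2 <;>
          rcases c0 with c0 | c0 <;> omega
    · exact (hindep u v hu hv huv).elim
  refine ⟨r, ?_, ?_⟩
  · intro e _
    have := hs3 e
    have := hr e
    omega
  · intro u v huv
    rcases le_total (G.degree u) (G.degree v) with h | h
    · exact main u v huv h
    · have := main v u huv.symm h
      rw [Sym2.eq_swap] at this
      exact ⟨fun h => (this.1 h).symm, fun h => (this.2 h).symm⟩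
end

section
/- Let G be a connected simple graph with maximum degree at most 3 that is not isomorphic to K2 (the complete graph on two vertices), such that the set of all vertices of degree 3 in G is an independent set. Then there exists a locally irregular 2-edge-coloring of ^2G, encoded by r : E(G) → {0,1,2}, with the additional property that for every edge uv of G with u of degree 1 and r(uv) = 1 (a red-blue colored pendant multiedge), it is not the case that the red degree of v equals 3 and the blue degree of v equals 3. -/
open scoped Classical

set_option linter.unusedSectionVars false

lemma aux_greedy {α C : Type*} [Nonempty C] (rank : α → ℕ) (F : α → (α → C) → C → Prop)
    (hF : ∀ e g g', (∀ f, rank f < rank e → g f = g' f) → ∀ c, F e g c → F e g' c)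
    (hex : ∀ e g, ∃ c, F e g c) : ∃ g : α → C, ∀ e, F e g (g e) := by
  choose k hk using hex
  let g : α → C := (measure rank).wf.fix
    (fun e rec => k e (fun f => if h : rank f < rank e then rec f h else Classical.arbitrary C))
  have hg : ∀ e, g e = k e (fun f => if rank f < rank e then g f else Classical.arbitrary C) := by
    intro e
    have := (measure rank).wf.fix_eq
      (fun e rec => k e (fun f => if h : rank f < rank e then rec f h else Classical.arbitrary C)) e
    simpa [g] using this
  refine ⟨g, fun e => ?_⟩
  rw [hg e]
  refine hF e _ g ?_ _ (hk e _)
  intro f hf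
  simp [hf]

lemma aux_cut {V : Type*} [Fintype V] (W : V → V → ℤ) (hs : ∀ u w, W u w = W w u)
    (hd : ∀ u, W u u = 0) :
    ∃ τ : V → ℤ, (∀ v, τ v = 1 ∨ τ v = -1) ∧ ∀ u, ∑ w, W u w * (τ u * τ w) ≤ 0 := by
  let f : (V → Bool) → V → ℤ := fun t v => if t v then 1 else -1
  let Q : (V → ℤ) → ℤ := fun τ => ∑ u, ∑ w, W u w * (τ u * τ w)
  obtain ⟨t, ht⟩ := Finite.exists_min (fun t : V → Bool => Q (f t))
  refine ⟨f t, fun v => ?_, fun u => ?_⟩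
  · simp only [f]; split_ifs <;> simp
  · have h1 := ht (Function.update t u (!(t u)))
    have h2 : f (Function.update t u (!(t u))) = fun v => f t v - (if v = u then 2 * f t u else 0) := by
      funext v
      simp only [f, Function.update_apply]
      by_cases hv : v = u
      · subst hv; cases t v <;> simp
      · simp [hv]
    rw [h2] at h1
    have h3 : Q (fun v => f t v - (if v = u then 2 * f t u else 0))
        = Q (f t) - 4 * ∑ w, W u w * (f t u * f t w) := by
      simp only [Q]
      have e1 : ∀ a b : V, W a b * ((f t a - (if a = u then 2 * f t u else 0)) *
          (f t b - (if b = u then 2 * f t u else 0))) =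
          W a b * (f t a * f t b) - (if a = u then 2 * (W u b * (f t u * f t b)) else 0)
          - (if b = u then 2 * (W u a * (f t u * f t a)) else 0) := by
        intro a b
        by_cases ha : a = u <;> by_cases hb : b = u
        · subst ha; subst hb; simp [hd]
        · subst ha; simp [hb]; ring
        · subst hb; simp [ha]; rw [hs a b]; ring
        · simp [ha, hb]
      simp only [e1, Finset.sum_sub_distrib]
      rw [Finset.sum_comm (f := fun a b => if a = u then 2 * (W u b * (f t u * f t b)) else 0)]
      simp [← Finset.mul_sum]
      ring
    rw [h3] at h1
    linarith

section aux
variable {V : Type*} [Fintype V] [DecidableEq V] {G : SimpleGraph V}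

lemma aux_mem {x y : V} : y ∈ G.neighborFinset x ↔ G.Adj x y := by simp

lemma aux_N1 {x a : V} (h : G.degree x = 1) (ha : G.Adj x a) : G.neighborFinset x = {a} := by
  symm
  apply Finset.eq_of_subset_of_card_le
  · intro z; simp only [Finset.mem_singleton, aux_mem]; rintro rfl; exact ha
  · simp [h]

lemma aux_N2 {x a b : V} (h : G.degree x = 2) (ha : G.Adj x a) (hb : G.Adj x b) (hab : a ≠ b) :
    G.neighborFinset x = {a, b} := by
  symm
  apply Finset.eq_of_subset_of_card_le
  · intro z; simp only [Finset.mem_singleton, Finset.mem_insert, aux_mem]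
    rintro (rfl | rfl) <;> assumption
  · simp [h, hab]

lemma aux_N3 {x a b c : V} (h : G.degree x = 3) (ha : G.Adj x a) (hb : G.Adj x b)
    (hc : G.Adj x c) (hab : a ≠ b) (hac : a ≠ c) (hbc : b ≠ c) :
    G.neighborFinset x = {a, b, c} := by
  symm
  apply Finset.eq_of_subset_of_card_le
  · intro z; simp only [Finset.mem_singleton, Finset.mem_insert, aux_mem]
    rintro (rfl | rfl | rfl) <;> assumption
  · rw [Finset.card_eq_three.2 ⟨a, b, c, hab, hac, hbc, rfl⟩]; simp [h]

lemma aux_u1 {x a b : V} (h : G.degree x = 1) (ha : G.Adj x a) (hb : G.Adj x b) : b = a := by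
  have : b ∈ G.neighborFinset x := aux_mem.2 hb
  rw [aux_N1 h ha] at this
  simpa using this

lemma aux_u2 {x a b c : V} (h : G.degree x = 2) (ha : G.Adj x a) (hb : G.Adj x b) (hab : b ≠ a)
    (hc : G.Adj x c) (hca : c ≠ a) : c = b := by
  have : c ∈ G.neighborFinset x := aux_mem.2 hc
  rw [aux_N2 h ha hb hab.symm] at this
  simpa [hca] using this

lemma aux_e2 {x : V} (h : 2 ≤ G.degree x) (a : V) : ∃ b, G.Adj x b ∧ b ≠ a := by
  have : 1 < (G.neighborFinset x).card := by
    rw [SimpleGraph.card_neighborFinset_eq_degree]; omega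
  obtain ⟨b, hb, hba⟩ := Finset.exists_mem_ne this a
  exact ⟨b, aux_mem.1 hb, hba⟩

lemma aux_inc (f : Sym2 V → ℤ) (x : V) :
    ∑ e ∈ G.edgeFinset.filter (fun e => x ∈ e), f e = ∑ y ∈ G.neighborFinset x, f s(x, y) := by
  symm
  apply Finset.sum_bij (fun y _ => s(x, y))
  · intro a ha; simpa using ha
  · intro a _ b _ h; exact Sym2.congr_right.1 h
  · intro e he
    simp only [Finset.mem_filter, SimpleGraph.mem_edgeFinset] at he
    obtain ⟨h1, h2⟩ := he
    obtain ⟨y, rfl⟩ := Sym2.mem_iff_exists.1 h2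
    exact ⟨y, aux_mem.2 (by simpa using h1), rfl⟩
  · intros; rfl

lemma aux_red (g : Sym2 V → ℤ) (hg : ∀ e, g e = -1 ∨ g e = 0 ∨ g e = 1) (x : V) :
    (redDeg G (fun e => (g e + 1).toNat) x : ℤ)
      = G.degree x + ∑ y ∈ G.neighborFinset x, g s(x, y) := by
  have : ∀ e, (((g e + 1).toNat : ℕ) : ℤ) = g e + 1 := by
    intro e; rcases hg e with h | h | h <;> simp [h]
  unfold redDeg
  push_cast [this]
  rw [aux_inc (fun e => g e + 1)]
  simp [Finset.sum_add_distrib]; ring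

lemma aux_blue (g : Sym2 V → ℤ) (hg : ∀ e, g e = -1 ∨ g e = 0 ∨ g e = 1) (x : V) :
    (blueDeg G (fun e => (g e + 1).toNat) x : ℤ)
      = G.degree x - ∑ y ∈ G.neighborFinset x, g s(x, y) := by
  have : ∀ e, (((2 - (g e + 1).toNat : ℕ)) : ℤ) = 1 - g e := by
    intro e; rcases hg e with h | h | h <;> simp [h]
  unfold blueDeg
  rw [Nat.cast_sum]
  simp only [this]
  rw [aux_inc (fun e => 1 - g e)]
  simp [Finset.sum_sub_distrib]

lemma aux_K2 (hconn : G.Connected) {u v : V} (huv : G.Adj u v) (hu : G.degree u = 1)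
    (hv : G.degree v = 1) : Nonempty (G ≃g (⊤ : SimpleGraph (Fin 2))) := by
  have hall : ∀ z, z = u ∨ z = v := by
    intro z
    obtain ⟨p⟩ := hconn.preconnected z u
    induction p with
    | nil => left; rfl
    | cons h p ih =>
      rcases ih huv hu with h' | h'
      · subst h'; right; exact aux_u1 hu huv h.symm
      · subst h'; left; exact aux_u1 hv huv.symm h.symm
  have hne := huv.ne
  let e : V ≃ Fin 2 :=
    { toFun := fun z => if z = u then 0 else 1
      invFun := fun i => if i = 0 then u else v
      left_inv := by
        intro z; rcases hall z with h | h <;> simp [h, hne.symm]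
      right_inv := by
        intro i; fin_cases i <;> simp [hne.symm] }
  refine ⟨⟨e, ?_⟩⟩
  intro a b
  rw [SimpleGraph.top_adj, e.injective.ne_iff]
  constructor
  · intro h
    rcases hall a with rfl | rfl <;> rcases hall b with rfl | rfl
    · exact absurd rfl h
    · exact huv
    · exact huv.symm
    · exact absurd rfl h
  · exact fun h => h.ne


/-- a thread with exactly two inner vertices -/
def auxT (G : SimpleGraph V) (u x y w : V) : Prop :=
  G.degree u = 3 ∧ G.degree w = 3 ∧ G.degree x = 2 ∧ G.degree y = 2 ∧
    G.Adj u x ∧ G.Adj x y ∧ G.Adj y w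

lemma auxT_symm {u x y w : V} (h : auxT G u x y w) : auxT G w y x u := by
  obtain ⟨a, b, c, d, e, f, g⟩ := h
  exact ⟨b, a, d, c, g.symm, f.symm, e.symm⟩

lemma auxT_uniq {u x y w y' w' : V} (h : auxT G u x y w) (h' : auxT G u x y' w') :
    y' = y ∧ w' = w := by
  obtain ⟨a, b, c, d, e, f, g⟩ := h
  obtain ⟨a', b', c', d', e', f', g'⟩ := h'
  have hyu : y ≠ u := by rintro rfl; omega
  have hyu' : y' ≠ u := by rintro rfl; omega
  have h1 : y' = y := aux_u2 c e.symm f hyu f' hyu'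
  subst h1
  refine ⟨rfl, ?_⟩
  have hw : w ≠ x := by rintro rfl; omega
  have hw' : w' ≠ x := by rintro rfl; omega
  exact aux_u2 d f.symm g hw g' hw'

lemma aux_tau (G : SimpleGraph V) (idx : Sym2 V → ℕ) :
    ∃ τ : V → ℤ, (∀ v, τ v = 1 ∨ τ v = -1) ∧
      ∀ u x y w x' y' w', auxT G u x y w → auxT G u x' y' w' → τ w = τ u → τ w' = τ u →
        idx s(u, x) < idx s(y, w) → idx s(u, x') < idx s(y', w') → x = x' := by
  let S : V → V → Finset (V × V) := fun u w =>
    Finset.univ.filter (fun p => u ≠ w ∧ auxT G u p.1 p.2 w)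
  obtain ⟨τ, hτ, hmin⟩ := aux_cut (fun u w => ((S u w).card : ℤ))
    (by
      intro u w
      have : (S u w).card = (S w u).card := by
        apply Finset.card_bij (fun p _ => (p.2, p.1))
        · intro p hp
          simp only [S, Finset.mem_filter, Finset.mem_univ, true_and] at hp ⊢
          exact ⟨hp.1.symm, auxT_symm hp.2⟩
        · rintro ⟨a, b⟩ _ ⟨c, d⟩ _ h
          simp only [Prod.mk.injEq] at h ⊢
          exact h.symm
        · rintro ⟨a, b⟩ hp
          simp only [S, Finset.mem_filter, Finset.mem_univ, true_and] at hp
          refine ⟨(b, a), ?_, rfl⟩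
          simp only [S, Finset.mem_filter, Finset.mem_univ, true_and]
          exact ⟨hp.1.symm, auxT_symm hp.2⟩
      simp only [this])
    (by intro u; simp [S])
  refine ⟨τ, hτ, ?_⟩
  intro u x y w x' y' w' h h' hw hw' hi hi'
  by_contra hne
  -- triples starting from u
  let R : Finset (V × V × V) :=
    Finset.univ.filter (fun p => u ≠ p.1 ∧ auxT G u p.2.1 p.2.2 p.1)
  have hsum : ∑ p ∈ R, τ u * τ p.1 ≤ 0 := by
    have := hmin u
    refine le_trans (le_of_eq ?_) this
    simp only [R, Finset.sum_filter]
    rw [Fintype.sum_prod_type]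
    refine Finset.sum_congr rfl fun w _ => ?_
    simp only [S, ← Finset.sum_filter]
    simp
  have hR : ∀ p ∈ R, u ≠ p.1 ∧ auxT G u p.2.1 p.2.2 p.1 := by
    intro p hp; simpa [R] using hp
  have hRinj : ∀ p ∈ R, ∀ q ∈ R, p.2.1 = q.2.1 → p = q := by
    rintro ⟨a, b, c⟩ hp ⟨a', b', c'⟩ hq hpq
    have h1 := (hR _ hp).2
    have h2 := (hR _ hq).2
    simp only at hpq h1 h2
    subst hpq
    obtain ⟨rfl, rfl⟩ := auxT_uniq h1 h2
    rfl
  have hsq : ∀ v, τ v * τ v = 1 := by intro v; rcases hτ v with h | h <;> simp [h]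
  have hu3 := h.1
  have hux := h.2.2.2.2.1
  have hux' := h'.2.2.2.2.1
  have hge : ∀ p : V × V × V, -1 ≤ τ u * τ p.1 := by
    intro p; rcases hτ u with h | h <;> rcases hτ p.1 with h' | h' <;> simp [h, h']
  -- loop case
  have loop : ∀ x y w x' y' w', auxT G u x y w → auxT G u x' y' w' → τ w' = τ u →
      idx s(u, x) < idx s(y, w) → idx s(u, x') < idx s(y', w') → x ≠ x' → w = u → False := by
    intro x y w x' y' w' h h' hw' hi hi' hne hwu
    subst hwu
    have hyx : y ≠ x := h.2.2.2.2.2.1.ne.symm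
    have hwy := h.2.2.2.2.2.2.symm
    have hwx := h.2.2.2.2.1
    have hwx' := h'.2.2.2.2.1
    by_cases hxy : x' = y
    · subst hxy
      obtain ⟨rfl, rfl⟩ := auxT_uniq (auxT_symm h) h'
      rw [Sym2.eq_swap (a := y'), Sym2.eq_swap (a := x')] at *
      omega
    · have hN := aux_N3 hu3 hwx hwy hwx' hyx.symm hne (Ne.symm hxy)
      have hw'u : w ≠ w' := by
        rintro rfl
        have h1 : y' ∈ G.neighborFinset w := aux_mem.2 h'.2.2.2.2.2.2.symm
        rw [hN] at h1
        simp only [Finset.mem_insert, Finset.mem_singleton] at h1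
        rcases h1 with rfl | rfl | rfl
        · exact hxy (auxT_uniq h (auxT_symm h')).1
        · exact hne (auxT_uniq (auxT_symm h) (auxT_symm h')).1.symm
        · exact h'.2.2.2.2.2.1.ne rfl
      have hmem : ((w', x', y') : V × V × V) ∈ R := by
        simp only [R, Finset.mem_filter, Finset.mem_univ, true_and]
        exact ⟨hw'u, h'⟩
      have hRe : R = {(w', x', y')} := by
        apply Finset.eq_singleton_iff_unique_mem.2
        refine ⟨hmem, ?_⟩
        intro q hq
        apply hRinj q hq _ hmem
        have h2 := hR q hq
        have h1 : q.2.1 ∈ G.neighborFinset w := aux_mem.2 h2.2.2.2.2.2.1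
        rw [hN] at h1
        simp only [Finset.mem_insert, Finset.mem_singleton] at h1
        rcases h1 with h1 | h1 | h1
        · have h3 := h2.2
          rw [h1] at h3
          exact absurd (auxT_uniq h h3).2.symm h2.1
        · have h3 := h2.2
          rw [h1] at h3
          exact absurd (auxT_uniq (auxT_symm h) h3).2.symm h2.1
        · exact h1
      rw [hRe, Finset.sum_singleton] at hsum
      simp only [hw', hsq] at hsum
      omega
  by_cases hwu : w = u
  · exact loop x y w x' y' w' h h' hw' hi hi' hne hwu
  by_cases hwu' : w' = u
  · exact loop x' y' w' x y w h' h hw hi' hi (Ne.symm hne) hwu'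
  have m1 : ((w, x, y) : V × V × V) ∈ R := by
    simp only [R, Finset.mem_filter, Finset.mem_univ, true_and]
    exact ⟨Ne.symm hwu, h⟩
  have m2 : ((w', x', y') : V × V × V) ∈ R.erase (w, x, y) := by
    refine Finset.mem_erase.2 ⟨?_, ?_⟩
    · intro hc; simp only [Prod.mk.injEq] at hc; exact hne hc.2.1.symm
    · simp only [R, Finset.mem_filter, Finset.mem_univ, true_and]
      exact ⟨Ne.symm hwu', h'⟩
  have hcard : R.card ≤ 3 := by
    rw [← hu3, ← SimpleGraph.card_neighborFinset_eq_degree]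
    apply Finset.card_le_card_of_injOn (fun p => p.2.1)
    · intro p hp; exact aux_mem.2 (hR p hp).2.2.2.2.2.1
    · intro p hp q hq hpq; exact hRinj p hp q hq hpq
  rw [← Finset.add_sum_erase _ _ m1, ← Finset.add_sum_erase _ _ m2] at hsum
  simp only [hw, hw', hsq] at hsum
  have hc2 := Finset.card_erase_of_mem m1
  have hc3 := Finset.card_erase_of_mem m2
  have := Finset.card_nsmul_le_sum ((R.erase (w, x, y)).erase (w', x', y'))
    (fun p => τ u * τ p.1) (-1) (fun p _ => hge p)
  simp only [nsmul_eq_mul] at this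
  have : (((R.erase (w, x, y)).erase (w', x', y')).card : ℤ) ≤ 1 := by
    have : ((R.erase (w, x, y)).erase (w', x', y')).card ≤ 1 := by omega
    exact_mod_cast this
  linarith

/-- edges at a vertex of degree three -/
def auxP (G : SimpleGraph V) (e : Sym2 V) : Prop := ∃ u ∈ e, G.degree u = 3

/-- the chosen zero edges -/
def auxZ (G : SimpleGraph V) (idx : Sym2 V → ℕ) (τ : V → ℤ) (u x : V) : Prop :=
  ∃ y w, auxT G u x y w ∧ τ w = τ u ∧ idx s(u, x) < idx s(y, w)

/-- constraint on the colour `c` of the edge `s(a, x)` coming from the side of `x` -/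
def auxK (G : SimpleGraph V) (rank : Sym2 V → ℕ) (τ : V → ℤ) (g : Sym2 V → ℤ)
    (a x : V) (c : ℤ) : Prop :=
  (G.degree x = 1 → c ≠ 0) ∧ (G.degree x = 2 → ∀ y, y ≠ a → G.Adj x y →
    (G.degree y = 3 → G.degree a = 1 → c ≠ - τ y) ∧
    (G.degree y = 3 → G.degree a ≠ 1 → c ≠ τ y) ∧
    (G.degree y = 1 → rank s(x, y) < rank s(a, x) → c ≠ - g s(x, y)) ∧
    (G.degree y = 2 → ∀ b, b ≠ x → G.Adj y b → rank s(y, b) < rank s(a, x) → c ≠ g s(y, b)))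

lemma aux_K_one (rank : Sym2 V → ℕ) (τ : V → ℤ) (g : Sym2 V → ℤ) {a x : V} (hax : G.Adj a x)
    (_hx3 : G.degree x ≠ 3) (hsub : ∀ v : V, G.degree v ≤ 3) :
    ∃ k : ℤ, ∀ c, c ≠ k → auxK G rank τ g a x c := by
  by_cases h1 : G.degree x = 1
  · refine ⟨0, fun c hc => ⟨fun _ => hc, fun h => by omega⟩⟩
  by_cases h2 : G.degree x = 2
  · obtain ⟨y, hxy, hya⟩ := aux_e2 (G := G) (x := x) (by omega) a
    have hy : ∀ z, z ≠ a → G.Adj x z → z = y := fun z hz hxz => aux_u2 h2 hax.symm hxy hya hxz hz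
    have hd : G.degree y = 1 ∨ G.degree y = 2 ∨ G.degree y = 3 := by
      have := hsub y
      have : 0 < G.degree y := (G.degree_pos_iff_exists_adj y).2 ⟨x, hxy.symm⟩
      omega
    rcases hd with hd | hd | hd
    · refine ⟨- g s(x, y), fun c hc => ⟨fun h => absurd h h1, fun _ z hz hxz => ?_⟩⟩
      obtain rfl := hy z hz hxz
      exact ⟨fun h => by omega, fun h => by omega, fun _ _ => hc, fun h => by omega⟩
    · obtain ⟨b, hyb, hbx⟩ := aux_e2 (G := G) (x := y) (by omega) x
      refine ⟨g s(y, b), fun c hc => ⟨fun h => absurd h h1, fun _ z hz hxz => ?_⟩⟩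
      obtain rfl := hy z hz hxz
      refine ⟨fun h => by omega, fun h => by omega, fun h => by omega, fun _ b' hb' hyb' _ => ?_⟩
      obtain rfl := aux_u2 hd hxy.symm hyb hbx hyb' hb'
      exact hc
    · by_cases ha : G.degree a = 1
      · refine ⟨- τ y, fun c hc => ⟨fun h => absurd h h1, fun _ z hz hxz => ?_⟩⟩
        obtain rfl := hy z hz hxz
        exact ⟨fun _ _ => hc, fun _ h => absurd ha h, fun h => by omega, fun h => by omega⟩
      · refine ⟨τ y, fun c hc => ⟨fun h => absurd h h1, fun _ z hz hxz => ?_⟩⟩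
        obtain rfl := hy z hz hxz
        exact ⟨fun _ h => absurd h ha, fun _ _ => hc, fun h => by omega, fun h => by omega⟩
  · exact ⟨0, fun c _ => ⟨fun h => absurd h h1, fun h => absurd h h2⟩⟩

lemma aux_color (hsub : ∀ v : V, G.degree v ≤ 3)
    (hindep : ∀ u v : V, G.degree u = 3 → G.degree v = 3 → ¬ G.Adj u v)
    (idx rank : Sym2 V → ℕ) (τ : V → ℤ) (hτ : ∀ v, τ v = 1 ∨ τ v = -1) :
    ∃ g : Sym2 V → ℤ, (∀ e, g e = -1 ∨ g e = 0 ∨ g e = 1) ∧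
      (∀ u x, G.Adj u x → G.degree u = 3 → auxZ G idx τ u x → g s(u, x) = 0) ∧
      (∀ u x, G.Adj u x → G.degree u = 3 → ¬ auxZ G idx τ u x → g s(u, x) = τ u) ∧
      (∀ a x, G.Adj a x → G.degree a ≠ 3 → G.degree x ≠ 3 →
        auxK G rank τ g a x (g s(a, x))) := by
  obtain ⟨g, hg⟩ := aux_greedy (C := ℤ) rank (fun e g c => (c = -1 ∨ c = 0 ∨ c = 1) ∧
      (∀ u x, e = s(u, x) → G.Adj u x → G.degree u = 3 → auxZ G idx τ u x → c = 0) ∧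
      (∀ u x, e = s(u, x) → G.Adj u x → G.degree u = 3 → ¬ auxZ G idx τ u x → c = τ u) ∧
      (∀ a x, e = s(a, x) → G.Adj a x → G.degree a ≠ 3 → G.degree x ≠ 3 →
        auxK G rank τ g a x c))
    (by
      rintro e g g' hgg c ⟨h1, h2, h3, h4⟩
      refine ⟨h1, h2, h3, ?_⟩
      intro a x he hax ha hx
      obtain ⟨k1, k2⟩ := h4 a x he hax ha hx
      refine ⟨k1, fun hx2 y hya hxy => ?_⟩
      obtain ⟨l1, l2, l3, l4⟩ := k2 hx2 y hya hxy
      subst he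
      refine ⟨l1, l2, ?_, ?_⟩
      · intro hy hr
        rw [← hgg _ hr]; exact l3 hy hr
      · intro hy b hb hyb hr
        rw [← hgg _ hr]; exact l4 hy b hb hyb hr)
    (by
      intro e g
      induction e with | _ p q
      by_cases hpq : G.Adj p q
      swap
      · refine ⟨0, by simp, ?_, ?_, ?_⟩
        all_goals
          intro a b he hab
          exfalso
          apply hpq
          rw [← SimpleGraph.mem_edgeSet, he]
          exact hab
      -- owner case
      have own : ∀ p q, G.Adj p q → G.degree p = 3 → ∃ c : ℤ, (c = -1 ∨ c = 0 ∨ c = 1) ∧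
        (∀ u x, s(p, q) = s(u, x) → G.Adj u x → G.degree u = 3 → auxZ G idx τ u x → c = 0) ∧
        (∀ u x, s(p, q) = s(u, x) → G.Adj u x → G.degree u = 3 → ¬ auxZ G idx τ u x → c = τ u) ∧
        (∀ a x, s(p, q) = s(a, x) → G.Adj a x → G.degree a ≠ 3 → G.degree x ≠ 3 →
        auxK G rank τ g a x c) := by
        intro p q hpq hp
        have hun : ∀ u x, s(p, q) = s(u, x) → G.degree u = 3 → u = p ∧ x = q := by
          intro u x he hu
          rcases Sym2.eq_iff.1 he with ⟨h1, h2⟩ | ⟨h1, h2⟩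
          · exact ⟨h1.symm, h2.symm⟩
          · subst h1; subst h2
            exact absurd hpq (hindep _ _ hp hu)
        refine ⟨if auxZ G idx τ p q then 0 else τ p, ?_, ?_, ?_, ?_⟩
        · rcases hτ p with h | h <;> split_ifs <;> simp [h]
        · intro u x he _ hu hz
          obtain ⟨rfl, rfl⟩ := hun u x he hu
          simp [hz]
        · intro u x he _ hu hz
          obtain ⟨rfl, rfl⟩ := hun u x he hu
          simp [hz]
        · intro a x he _ ha hx
          exfalso
          rcases Sym2.eq_iff.1 he with ⟨h1, h2⟩ | ⟨h1, h2⟩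
          · subst h1; exact ha hp
          · subst h1; exact hx hp
      by_cases hp : G.degree p = 3
      · exact own p q hpq hp
      by_cases hq : G.degree q = 3
      · obtain ⟨c, hc⟩ := own q p hpq.symm hq
        refine ⟨c, ?_⟩
        rw [Sym2.eq_swap]
        exact hc
      obtain ⟨k1, hk1⟩ := aux_K_one rank τ g hpq hq hsub
      obtain ⟨k2, hk2⟩ := aux_K_one rank τ g hpq.symm hp hsub
      have : ∃ c : ℤ, (c = -1 ∨ c = 0 ∨ c = 1) ∧ c ≠ k1 ∧ c ≠ k2 := by
        by_cases h0 : (0 : ℤ) ≠ k1 ∧ (0 : ℤ) ≠ k2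
        · exact ⟨0, by simp, h0⟩
        by_cases h1 : (1 : ℤ) ≠ k1 ∧ (1 : ℤ) ≠ k2
        · exact ⟨1, by simp, h1⟩
        exact ⟨-1, by simp, by omega, by omega⟩
      obtain ⟨c, hc, hc1, hc2⟩ := this
      refine ⟨c, hc, ?_, ?_, ?_⟩
      · intro u x he _ hu
        rcases Sym2.eq_iff.1 he with ⟨h1, h2⟩ | ⟨h1, h2⟩
        · subst h1; exact absurd hu hp
        · subst h2; exact absurd hu hq
      · intro u x he _ hu
        rcases Sym2.eq_iff.1 he with ⟨h1, h2⟩ | ⟨h1, h2⟩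
        · subst h1; exact absurd hu hp
        · subst h2; exact absurd hu hq
      · intro a x he _ _ _
        rcases Sym2.eq_iff.1 he with ⟨h1, h2⟩ | ⟨h1, h2⟩
        · subst h1; subst h2; exact hk1 c hc1
        · subst h1; subst h2; exact hk2 c hc2)
  refine ⟨g, fun e => (hg e).1, fun u x => (hg _).2.1 u x rfl, fun u x => (hg _).2.2.1 u x rfl,
    fun a x => (hg _).2.2.2 a x rfl⟩

lemma aux_rank (G : SimpleGraph V) : ∃ idx rank : Sym2 V → ℕ, Function.Injective idx ∧
    (∀ e f, auxP G e → ¬ auxP G f → rank e < rank f) ∧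
    (∀ e f, ¬ auxP G e → ¬ auxP G f → e ≠ f → rank e ≠ rank f) ∧
    (∀ e f, (∃ u ∈ e, G.degree u = 1) → ¬ auxP G f → ¬ (∃ u ∈ f, G.degree u = 1) →
      rank e < rank f) := by
  let eq := Fintype.equivFin (Sym2 V)
  let N := Fintype.card (Sym2 V)
  have hlt : ∀ e, (eq e : ℕ) < N := fun e => (eq e).2
  have hinj : Function.Injective (fun e => (eq e : ℕ)) := fun a b h => eq.injective (Fin.ext h)
  refine ⟨fun e => eq e, fun e => if auxP G e then 0 else
    if (∃ u ∈ e, G.degree u = 1) then 1 + eq e else 1 + N + eq e, hinj, ?_, ?_, ?_⟩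
  · intro e f he hf
    simp only [he, hf, if_true, if_false]
    split_ifs <;> omega
  · intro e f he hf hne h
    have h1 := hlt e
    have h2 := hlt f
    simp only [he, hf, if_false] at h
    apply hne
    apply hinj
    simp only
    split_ifs at h <;> omega
  · intro e f he hf hf'
    have h1 := hlt e
    simp only [he, hf, hf', if_true, if_false]
    split_ifs <;> omega

end aux

/-- If `G` is a connected subcubic simple graph not isomorphic to `K₂` in
which the vertices of degree 3 form an independent set, then `²G` admits a
locally irregular 2-edge-coloring `r` such that for every pendant edge `uv`
(with `u` of degree 1) colored red-blue (`r s(u,v) = 1`), it is not the case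
that the other end `v` has red degree 3 and blue degree 3. -/
theorem lir_two_mul_subcubic_indep_pendant {V : Type*} [Fintype V] [DecidableEq V]
    (G : SimpleGraph V) (hconn : G.Connected)
    (hsub : ∀ v : V, G.degree v ≤ 3)
    (hindep : ∀ u v : V, G.degree u = 3 → G.degree v = 3 → ¬ G.Adj u v)
    (hK2 : ¬ Nonempty (G ≃g (⊤ : SimpleGraph (Fin 2)))) :
    ∃ r : Sym2 V → ℕ, IsLIR2 G r ∧
      ∀ u v : V, G.Adj u v → G.degree u = 1 → r s(u, v) = 1 →
        ¬ (redDeg G r v = 3 ∧ blueDeg G r v = 3) := by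
  obtain ⟨idx, rank, hidx, hr1, hr2, hr3⟩ := aux_rank G
  obtain ⟨τ, hτ, hZ1⟩ := aux_tau G idx
  obtain ⟨g, hg, hgZ, hgN, hgK⟩ := aux_color hsub hindep idx rank τ hτ
  have hsw : ∀ a b : V, g s(a, b) = g s(b, a) := fun a b => by rw [Sym2.eq_swap]
  have hPm : ∀ a b : V, G.degree a = 3 → auxP G s(a, b) := fun a b h => ⟨a, by simp, h⟩
  have hPm' : ∀ a b : V, G.degree b = 3 → auxP G s(a, b) := fun a b h => ⟨b, by simp, h⟩
  have hPn : ∀ a b : V, G.degree a ≠ 3 → G.degree b ≠ 3 → ¬ auxP G s(a, b) := by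
    rintro a b ha hb ⟨u, hu, hu3⟩
    rcases Sym2.mem_iff.1 hu with rfl | rfl
    · exact ha hu3
    · exact hb hu3
  have hτ0 : ∀ v, τ v ≠ 0 := by
    intro v h; rcases hτ v with h' | h' <;> rw [h] at h' <;> norm_num at h'
  -- the L-constraint, ranked
  have hK4 : ∀ a x y b, G.Adj a x → G.Adj x y → G.Adj y b → G.degree x = 2 → G.degree y = 2 →
      a ≠ y → b ≠ x → G.degree a ≠ 3 → rank s(y, b) < rank s(a, x) → g s(a, x) ≠ g s(y, b) := by
    intro a x y b hax hxy hyb hx hy hay hbx ha hr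
    exact (((hgK a x hax ha (by omega)).2 hx y hay.symm hxy).2.2.2 hy b hbx hyb hr)
  have hL : ∀ a x y b, G.Adj a x → G.Adj x y → G.Adj y b → G.degree x = 2 → G.degree y = 2 →
      a ≠ y → b ≠ x → g s(a, x) ≠ g s(y, b) := by
    intro a x y b hax hxy hyb hx hy hay hbx
    have hne : s(a, x) ≠ s(y, b) := by
      intro h
      rcases Sym2.eq_iff.1 h with ⟨h1, h2⟩ | ⟨h1, h2⟩
      · exact hay h1
      · exact hxy.ne h2
    have hrev : G.degree b ≠ 3 → rank s(a, x) < rank s(y, b) → g s(a, x) ≠ g s(y, b) := by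
      intro hb hr h
      refine hK4 b y x a hyb.symm hxy.symm hax.symm hy hx hbx hay hb ?_ ?_
      · rw [Sym2.eq_swap (a := x), Sym2.eq_swap (a := b)]; exact hr
      · rw [hsw b y, hsw x a]; exact h.symm
    by_cases ha : G.degree a = 3 <;> by_cases hb : G.degree b = 3
    · have hT : auxT G a x y b := ⟨ha, hb, hx, hy, hax, hxy, hyb⟩
      have hT' := auxT_symm hT
      have z1 : auxZ G idx τ a x ↔ τ b = τ a ∧ idx s(a, x) < idx s(y, b) := by
        constructor
        · rintro ⟨y', w', h, h1, h2⟩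
          obtain ⟨rfl, rfl⟩ := auxT_uniq hT h
          exact ⟨h1, h2⟩
        · rintro ⟨h1, h2⟩; exact ⟨y, b, hT, h1, h2⟩
      have z2 : auxZ G idx τ b y ↔ τ a = τ b ∧ idx s(y, b) < idx s(a, x) := by
        rw [Sym2.eq_swap (a := y), Sym2.eq_swap (a := a)]
        constructor
        · rintro ⟨y', w', h, h1, h2⟩
          obtain ⟨rfl, rfl⟩ := auxT_uniq hT' h
          exact ⟨h1, h2⟩
        · rintro ⟨h1, h2⟩; exact ⟨x, a, hT', h1, h2⟩
      have hi : idx s(a, x) ≠ idx s(y, b) := fun h => hne (hidx h)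
      rw [hsw y b]
      by_cases c1 : auxZ G idx τ a x <;> by_cases c2 : auxZ G idx τ b y
      · have := (z1.1 c1).2; have := (z2.1 c2).2; omega
      · rw [hgZ _ _ hax ha c1, hgN _ _ hyb.symm hb c2]; exact (hτ0 b).symm
      · rw [hgN _ _ hax ha c1, hgZ _ _ hyb.symm hb c2]; exact (hτ0 a)
      · rw [hgN _ _ hax ha c1, hgN _ _ hyb.symm hb c2]
        intro h
        rcases lt_or_gt_of_ne hi with h' | h'
        · exact c1 (z1.2 ⟨h.symm, h'⟩)
        · exact c2 (z2.2 ⟨h, h'⟩)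
    · exact hrev hb (hr1 _ _ (hPm _ _ ha) (hPn _ _ (by omega) hb))
    · exact hK4 a x y b hax hxy hyb hx hy hay hbx ha
        (hr1 _ _ (hPm' _ _ hb) (hPn _ _ ha (by omega)))
    · rcases lt_or_gt_of_ne (hr2 _ _ (hPn a x ha (by omega)) (hPn y b (by omega) hb) hne) with h | h
      · exact hrev hb h
      · exact hK4 a x y b hax hxy hyb hx hy hay hbx ha h
  -- vertices of degree three
  have hσ : ∀ u, G.degree u = 3 → ((∑ y ∈ G.neighborFinset u, g s(u, y)) = 3 * τ u ∨
      (∑ y ∈ G.neighborFinset u, g s(u, y)) = 2 * τ u) ∧ ∀ x, auxZ G idx τ u x →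
      (∑ y ∈ G.neighborFinset u, g s(u, y)) = 2 * τ u := by
    intro u hu
    obtain ⟨a, b, c, hab, hac, hbc, hN⟩ :=
      Finset.card_eq_three.1 ((G.card_neighborFinset_eq_degree u).trans hu)
    have ha : G.Adj u a := aux_mem.1 (by rw [hN]; simp)
    have hb : G.Adj u b := aux_mem.1 (by rw [hN]; simp)
    have hc : G.Adj u c := aux_mem.1 (by rw [hN]; simp)
    have hZu : ∀ x x', auxZ G idx τ u x → auxZ G idx τ u x' → x = x' := by
      rintro x x' ⟨y, w, h1, h2, h3⟩ ⟨y', w', h1', h2', h3'⟩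
      exact hZ1 u x y w x' y' w' h1 h1' h2 h2' h3 h3'
    have hZm : ∀ x, auxZ G idx τ u x → x = a ∨ x = b ∨ x = c := by
      rintro x ⟨y, w, h1, -⟩
      have : x ∈ G.neighborFinset u := aux_mem.2 h1.2.2.2.2.1
      rw [hN] at this
      simpa using this
    have hs : (∑ y ∈ G.neighborFinset u, g s(u, y)) = g s(u, a) + g s(u, b) + g s(u, c) := by
      rw [hN, Finset.sum_insert (by simp [hab, hac]), Finset.sum_pair hbc]; ring
    rw [hs]
    by_cases za : auxZ G idx τ u a
    · have zb : ¬ auxZ G idx τ u b := fun h => hab (hZu _ _ za h)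
      have zc : ¬ auxZ G idx τ u c := fun h => hac (hZu _ _ za h)
      rw [hgZ _ _ ha hu za, hgN _ _ hb hu zb, hgN _ _ hc hu zc]
      exact ⟨Or.inr (by ring), fun _ _ => by ring⟩
    by_cases zb : auxZ G idx τ u b
    · have zc : ¬ auxZ G idx τ u c := fun h => hbc (hZu _ _ zb h)
      rw [hgN _ _ ha hu za, hgZ _ _ hb hu zb, hgN _ _ hc hu zc]
      exact ⟨Or.inr (by ring), fun _ _ => by ring⟩
    by_cases zc : auxZ G idx τ u c
    · rw [hgN _ _ ha hu za, hgN _ _ hb hu zb, hgZ _ _ hc hu zc]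
      exact ⟨Or.inr (by ring), fun _ _ => by ring⟩
    rw [hgN _ _ ha hu za, hgN _ _ hb hu zb, hgN _ _ hc hu zc]
    refine ⟨Or.inl (by ring), fun x hx => ?_⟩
    rcases hZm x hx with rfl | rfl | rfl <;> contradiction
  have hσ1 : ∀ u v, G.Adj u v → G.degree u = 1 →
      (∑ y ∈ G.neighborFinset u, g s(u, y)) = g s(u, v) := by
    intro u v huv hu
    rw [aux_N1 hu huv]; simp
  have hσ2 : ∀ u v w, G.Adj u v → G.Adj u w → v ≠ w → G.degree u = 2 →
      (∑ y ∈ G.neighborFinset u, g s(u, y)) = g s(u, v) + g s(u, w) := by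
    intro u v w huv huw hvw hu
    rw [aux_N2 hu huv huw hvw, Finset.sum_pair hvw]
  -- leaf edges
  have hleaf3 : ∀ u v, G.Adj u v → G.degree u = 1 → G.degree v = 3 → g s(u, v) = τ v := by
    intro u v huv hu hv
    rw [hsw]
    refine hgN _ _ huv.symm hv ?_
    rintro ⟨y, w, h, -⟩
    have := h.2.2.1
    omega
  have hleaf0 : ∀ u v, G.Adj u v → G.degree u = 1 → g s(u, v) ≠ 0 := by
    intro u v huv hu
    by_cases hv : G.degree v = 3
    · rw [hleaf3 u v huv hu hv]; exact hτ0 v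
    · rw [hsw]
      exact (hgK v u huv.symm hv (by omega)).1 hu
  have hleaf2 : ∀ u v y, G.Adj u v → G.degree u = 1 → G.degree v = 2 → G.Adj v y → y ≠ u →
      g s(u, v) ≠ - g s(v, y) := by
    intro u v y huv hu hv hvy hyu
    have hd : G.degree y = 1 ∨ G.degree y = 2 ∨ G.degree y = 3 := by
      have := hsub y
      have : 0 < G.degree y := (G.degree_pos_iff_exists_adj y).2 ⟨v, hvy.symm⟩
      omega
    have hback : G.degree y ≠ 3 → rank s(u, v) < rank s(v, y) → g s(u, v) ≠ - g s(v, y) := by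
      intro hy hr
      have := ((hgK y v hvy.symm hy (by omega)).2 hv u hyu.symm huv.symm).2.2.1 hu
        (by rw [Sym2.eq_swap (a := v), Sym2.eq_swap (a := y)]; exact hr)
      rw [hsw y v, hsw v u] at this
      omega
    have hfw := (hgK u v huv (by omega) (by omega)).2 hv y hyu hvy
    rcases hd with hd | hd | hd
    · have hne : s(u, v) ≠ s(v, y) := by
        intro h
        rcases Sym2.eq_iff.1 h with ⟨h1, h2⟩ | ⟨h1, h2⟩
        · exact huv.ne h1
        · exact hyu h1.symm
      rcases lt_or_gt_of_ne (hr2 _ _ (hPn u v (by omega) (by omega))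
        (hPn v y (by omega) (by omega)) hne) with h | h
      · exact hback (by omega) h
      · exact hfw.2.2.1 hd h
    · apply hback (by omega)
      apply hr3 _ _ ⟨u, by simp, hu⟩ (hPn v y (by omega) (by omega))
      rintro ⟨z, hz, hz1⟩
      rcases Sym2.mem_iff.1 hz with rfl | rfl <;> omega
    · have := hfw.1 hd hu
      have h2 : g s(v, y) = τ y := by
        rw [hsw]
        refine hgN _ _ hvy.symm hd ?_
        rintro ⟨y', w, h, -⟩
        have e1 : y' ≠ y := by
          rintro rfl
          have := h.2.2.2.1
          omega
        obtain rfl := aux_u2 hv hvy huv.symm hyu.symm h.2.2.2.2.2.1 e1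
        have := h.2.2.2.1
        omega
      rw [h2]; exact this
  -- integer form of the condition
  let Ok : V → V → Prop := fun u v =>
    (0 ≤ g s(u, v) → (G.degree u : ℤ) + (∑ y ∈ G.neighborFinset u, g s(u, y)) ≠
      G.degree v + ∑ y ∈ G.neighborFinset v, g s(v, y)) ∧
    (g s(u, v) ≤ 0 → (G.degree u : ℤ) - (∑ y ∈ G.neighborFinset u, g s(u, y)) ≠
      G.degree v - ∑ y ∈ G.neighborFinset v, g s(v, y))
  have hOksymm : ∀ u v, Ok u v → Ok v u := by
    intro u v h
    refine ⟨fun h' => (h.1 (by rw [hsw]; exact h')).symm, fun h' => (h.2 (by rw [hsw]; exact h')).symm⟩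
  have ok12 : ∀ u v, G.Adj u v → G.degree u = 1 → G.degree v = 2 → Ok u v := by
    intro u v huv hu hv
    obtain ⟨y, hvy, hyu⟩ := aux_e2 (G := G) (x := v) (by omega) u
    have e1 := hσ1 u v huv hu
    have e2 := hσ2 v u y huv.symm hvy hyu.symm hv
    have e3 := hleaf0 u v huv hu
    have e4 := hleaf2 u v y huv hu hv hvy hyu
    simp only [Ok]
    rw [e1, e2, hsw v u, hu, hv]
    rcases hg s(u, v) with h | h | h <;> constructor <;> intro _ <;> push_cast <;> omega
  have ok13 : ∀ u v, G.Adj u v → G.degree u = 1 → G.degree v = 3 → Ok u v := by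
    intro u v huv hu hv
    have e1 := hσ1 u v huv hu
    have e2 := (hσ v hv).1
    have e3 := hleaf3 u v huv hu hv
    simp only [Ok]
    rw [e1, e3, hu, hv]
    rcases hτ v with h | h <;> constructor <;> intro _ <;> push_cast <;> omega
  have ok22 : ∀ u v, G.Adj u v → G.degree u = 2 → G.degree v = 2 → Ok u v := by
    intro u v huv hu hv
    obtain ⟨y, hvy, hyu⟩ := aux_e2 (G := G) (x := v) (by omega) u
    obtain ⟨a, hua, hav⟩ := aux_e2 (G := G) (x := u) (by omega) v
    have e1 := hσ2 u v a huv hua hav.symm hu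
    have e2 := hσ2 v u y huv.symm hvy hyu.symm hv
    have e3 := hL a u v y hua.symm huv hvy hu hv hav hyu
    rw [hsw a u] at e3
    simp only [Ok]
    rw [e1, e2, hsw v u, hu, hv]
    constructor <;> intro _ <;> push_cast <;> omega
  have ok32 : ∀ u v, G.Adj u v → G.degree u = 3 → G.degree v = 2 → Ok u v := by
    intro u v huv hu hv
    obtain ⟨y, hvy, hyu⟩ := aux_e2 (G := G) (x := v) (by omega) u
    have e2 := hσ2 v u y huv.symm hvy hyu.symm hv
    have e4 := hg s(v, y)
    simp only [Ok]
    rw [e2, hsw v u, hu, hv]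
    by_cases hz : auxZ G idx τ u v
    · rw [(hσ u hu).2 v hz, hgZ u v huv hu hz]
      obtain ⟨y', w, h, -⟩ := hz
      have h1 : y' ≠ u := by
        rintro rfl
        have := h.2.2.2.1
        omega
      obtain rfl := aux_u2 hv huv.symm hvy hyu h.2.2.2.2.2.1 h1
      have hy2 := h.2.2.2.1
      have e5 := ((hgK y' v hvy.symm (by omega) (by omega)).2 hv u hyu.symm huv.symm).2.1 hu
        (by omega)
      rw [hsw] at e5
      rcases hτ u with h | h <;> constructor <;> intro _ <;> push_cast <;> omega
    · have e1 := (hσ u hu).1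
      rw [hgN u v huv hu hz]
      rcases hτ u with h | h <;> constructor <;> intro _ <;> push_cast <;> omega
  have okall : ∀ u v, G.Adj u v → Ok u v := by
    intro u v huv
    have hdu : G.degree u = 1 ∨ G.degree u = 2 ∨ G.degree u = 3 := by
      have := hsub u
      have : 0 < G.degree u := (G.degree_pos_iff_exists_adj u).2 ⟨v, huv⟩
      omega
    have hdv : G.degree v = 1 ∨ G.degree v = 2 ∨ G.degree v = 3 := by
      have := hsub v
      have : 0 < G.degree v := (G.degree_pos_iff_exists_adj v).2 ⟨u, huv.symm⟩
      omega
    rcases hdu with hu | hu | hu <;> rcases hdv with hv | hv | hv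
    · exact absurd (aux_K2 hconn huv hu hv) hK2
    · exact ok12 u v huv hu hv
    · exact ok13 u v huv hu hv
    · exact hOksymm _ _ (ok12 v u huv.symm hv hu)
    · exact ok22 u v huv hu hv
    · exact hOksymm _ _ (ok32 v u huv.symm hv hu)
    · exact hOksymm _ _ (ok13 v u huv.symm hv hu)
    · exact ok32 u v huv hu hv
    · exact absurd huv (hindep u v hu hv)
  refine ⟨fun e => (g e + 1).toNat, ⟨?_, ?_⟩, ?_⟩
  · intro e _
    rcases hg e with h | h | h <;> simp [h]
  · intro u v huv
    have h := okall u v huv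
    simp only [Ok] at h
    rw [← aux_red g hg, ← aux_red g hg, ← aux_blue g hg, ← aux_blue g hg] at h
    refine ⟨fun h1 h2 => h.1 (by dsimp only at h1; omega) (by rw [h2]), fun h1 h2 => h.2 (by dsimp only at h1; omega) (by rw [h2])⟩
  · intro u v huv hu h
    have := hleaf0 u v huv hu
    exfalso
    simp only at h
    omega
end
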